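/- Let α,β > −1/2. There exist constants c⁽¹⁾ > 0 and C > 0 depending only on α and β such that for every positive integer L and every θ with c⁽¹⁾/L ≤ θ ≤ π/2, setting L̃ := L + (α+β+2)/2, |v_L^{(α,β)}(1,cos θ) − (2^{−(α+β+1)}/Γ(α+1)) L̃^{α+1/2} m_{α+1,β}(θ) cos ω_{α+1}(L̃θ)| ≤ C (2^{−(α+β+1)}/Γ(α+1)) L̃^{α+1/2} m_{α+1,β}(θ) (sin θ)^{−1} L^{−1}. -/

import Mathlib

open MeasureTheory Real
open scoped ENNReal NNReal

/-- The classical Jacobi polynomial `P_n^{(a,b)}` (hypergeometric representation,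
normalised so that `P_n^{(a,b)}(1) = Γ(n+a+1)/(Γ(n+1)Γ(a+1))`). -/
noncomputable def jacobiP (a b : ℝ) (n : ℕ) (x : ℝ) : ℝ :=
  ∑ s ∈ Finset.range (n + 1),
    (Real.Gamma ((n : ℝ) + a + 1) /
        (Real.Gamma ((s : ℝ) + a + 1) * (Nat.factorial (n - s) : ℝ))) *
      (Real.Gamma ((n : ℝ) + b + 1) /
        (Real.Gamma ((n : ℝ) - (s : ℝ) + b + 1) * (Nat.factorial s : ℝ))) *
      ((x - 1) / 2) ^ s * ((x + 1) / 2) ^ (n - s)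

/-- `M_ℓ^{(a,b)}`, the `L₂(w_{a,b})` normalisation constant of `P_ℓ^{(a,b)}`. -/
noncomputable def jacobiM (a b : ℝ) (ℓ : ℕ) : ℝ :=
  (2 : ℝ) ^ (a + b + 1) / (2 * (ℓ : ℝ) + a + b + 1) *
    (Real.Gamma ((ℓ : ℝ) + a + 1) * Real.Gamma ((ℓ : ℝ) + b + 1)) /
    (Real.Gamma ((ℓ : ℝ) + 1) * Real.Gamma ((ℓ : ℝ) + a + b + 1))

/-- The generalised Dirichlet kernel
`v_L^{(a,b)}(t,s) = Σ_{ℓ=0}^{L} (M_ℓ^{(a,b)})⁻¹ P_ℓ^{(a,b)}(t) P_ℓ^{(a,b)}(s)`. -/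
noncomputable def dirichletJ (a b : ℝ) (L : ℕ) (t s : ℝ) : ℝ :=
  ∑ ℓ ∈ Finset.range (L + 1), (jacobiM a b ℓ)⁻¹ * jacobiP a b ℓ t * jacobiP a b ℓ s

/-- The filtered Jacobi kernel
`v_{L,g}^{(a,b)}(t,s) = Σ_{ℓ=0}^{2L−1} g(ℓ/L) (M_ℓ^{(a,b)})⁻¹ P_ℓ^{(a,b)}(t) P_ℓ^{(a,b)}(s)`. -/
noncomputable def filteredJ (a b : ℝ) (g : ℝ → ℝ) (L : ℕ) (t s : ℝ) : ℝ :=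
  ∑ ℓ ∈ Finset.range (2 * L),
    g ((ℓ : ℝ) / (L : ℝ)) * (jacobiM a b ℓ)⁻¹ * jacobiP a b ℓ t * jacobiP a b ℓ s

/-- `Z(d,ℓ)`, the dimension of the space of spherical harmonics of degree `ℓ` on `S^d`. -/
noncomputable def Zdim (d ℓ : ℕ) : ℝ :=
  (2 * (ℓ : ℝ) + (d : ℝ) - 1) * Real.Gamma ((ℓ : ℝ) + (d : ℝ) - 1) /
    (Real.Gamma (d : ℝ) * Real.Gamma ((ℓ : ℝ) + 1))

/-- The normalised Legendre polynomial `P_ℓ^{(d+1)}` for `S^d`. -/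
noncomputable def normLegendre (d ℓ : ℕ) (t : ℝ) : ℝ :=
  jacobiP (((d : ℝ) - 2) / 2) (((d : ℝ) - 2) / 2) ℓ t /
    jacobiP (((d : ℝ) - 2) / 2) (((d : ℝ) - 2) / 2) ℓ 1

/-- The Dirichlet kernel on `S^d`: `v_L^{(d)}(t) = Σ_{ℓ=0}^L Z(d,ℓ) P_ℓ^{(d+1)}(t)`. -/
noncomputable def sphDirichlet (d L : ℕ) (t : ℝ) : ℝ :=
  ∑ ℓ ∈ Finset.range (L + 1), Zdim d ℓ * normLegendre d ℓ t

/-- The filtered kernel on `S^d`: `v_{L,g}^{(d)}(t) = Σ_{ℓ=0}^∞ g(ℓ/L) Z(d,ℓ) P_ℓ^{(d+1)}(t)`. -/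
noncomputable def sphFiltered (d : ℕ) (g : ℝ → ℝ) (L : ℕ) (t : ℝ) : ℝ :=
  ∑' ℓ : ℕ, g ((ℓ : ℝ) / (L : ℝ)) * Zdim d ℓ * normLegendre d ℓ t

/-- The surface area `|S^n| = 2π^{(n+1)/2}/Γ((n+1)/2)` of the unit sphere `S^n`. -/
noncomputable def sphereArea (n : ℕ) : ℝ :=
  2 * Real.pi ^ (((n : ℝ) + 1) / 2) / Real.Gamma (((n : ℝ) + 1) / 2)

/-- `m_{a,b}(θ) = π^{−1/2} (sin(θ/2))^{−a−1/2} (cos(θ/2))^{−b−1/2}`. -/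
noncomputable def mAB (a b θ : ℝ) : ℝ :=
  Real.pi ^ (-(1 / 2 : ℝ)) * Real.sin (θ / 2) ^ (-a - 1 / 2) *
    Real.cos (θ / 2) ^ (-b - 1 / 2)

/-- `ω_γ(z) = z − γπ/2 − π/4`. -/
noncomputable def omegaA (γ z : ℝ) : ℝ := z - γ * Real.pi / 2 - Real.pi / 4


/-! ### Part 1: comparison lemma for the ODE -/

lemma djo_gronwall (F F' H H' : ℝ → ℝ) (k M x0 x1 : ℝ) (hx : x0 ≤ x1) (hk : 0 ≤ k)
    (hF : ∀ x ∈ Set.Icc x0 x1, HasDerivAt F (F' x) x)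
    (hH : ∀ x ∈ Set.Icc x0 x1, HasDerivAt H (H' x) x)
    (hle : ∀ x ∈ Set.Icc x0 x1, F' x ≤ H' x * F x + k)
    (hM : ∀ x ∈ Set.Icc x0 x1, Real.exp (-H x) ≤ M) :
    F x1 * Real.exp (-H x1) ≤ F x0 * Real.exp (-H x0) + k * M * (x1 - x0) := by
  have hd : ∀ x ∈ Set.Icc x0 x1, HasDerivAt (fun x => F x * Real.exp (-H x) - k * M * x)
      (F' x * Real.exp (-H x) + F x * (Real.exp (-H x) * (-H' x)) - k * M * 1) x := by
    intro x hx
    exact ((hF x hx).mul ((hH x hx).neg.exp)).sub ((hasDerivAt_id x).const_mul (k * M))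
  have hanti : AntitoneOn (fun x => F x * Real.exp (-H x) - k * M * x) (Set.Icc x0 x1) := by
    apply antitoneOn_of_deriv_nonpos (convex_Icc _ _)
    · intro x hx
      exact (hd x hx).continuousAt.continuousWithinAt
    · intro x hx
      rw [interior_Icc] at hx
      exact (hd x (Set.Ioo_subset_Icc_self hx)).differentiableAt.differentiableWithinAt
    · intro x hx
      rw [interior_Icc] at hx
      have hx' := Set.Ioo_subset_Icc_self hx
      rw [(hd x hx').deriv]
      have h1 := hle x hx'
      have h2 := hM x hx'
      have h3 := Real.exp_pos (-H x)
      have h4 : (F' x - H' x * F x) * Real.exp (-H x) ≤ k * Real.exp (-H x) :=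
        mul_le_mul_of_nonneg_right (by linarith) h3.le
      have h5 : k * Real.exp (-H x) ≤ k * M := mul_le_mul_of_nonneg_left h2 hk
      nlinarith
  have := hanti (Set.left_mem_Icc.2 hx) (Set.right_mem_Icc.2 hx) hx
  simp only at this
  linarith

/-- Region one: `0 < θ ≤ 1/N`. -/
lemma djo_region1 (ν G K N : ℝ) (hν : 1 ≤ ν) (hG : 0 ≤ G) (hK : 0 ≤ K) (hN : 1 ≤ N)
    (D e W g : ℝ → ℝ)
    (hD : ∀ x ∈ Set.Ioc 0 (π / 2), HasDerivAt D (e x) x)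
    (he : ∀ x ∈ Set.Ioc 0 (π / 2),
      HasDerivAt e (-(2 * ν / x) * e x - N ^ 2 * D x - g x * (D x + W x)) x)
    (hg : ∀ x ∈ Set.Ioc 0 (π / 2), |g x| ≤ G)
    (hW : ∀ x ∈ Set.Ioc 0 (π / 2), |W x| ≤ K)
    (h0 : Filter.Tendsto (fun x => e x ^ 2 + N ^ 2 * D x ^ 2) (nhdsWithin 0 (Set.Ioi 0)) (nhds 0)) :
    e (1 / N) ^ 2 + N ^ 2 * D (1 / N) ^ 2 ≤ Real.exp (G + 1) * (G ^ 2 * K ^ 2) / N ^ 2 := by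
  have hN0 : 0 < N := by linarith
  have hN1 : 1 / N ≤ π / 2 := by
    have : 1 / N ≤ 1 := by rw [div_le_one hN0]; exact hN
    linarith [Real.pi_gt_three]
  set F : ℝ → ℝ := fun x => e x ^ 2 + N ^ 2 * D x ^ 2 with hFdef
  set k : ℝ := G ^ 2 * K ^ 2 / N with hkdef
  have hk : 0 ≤ k := by positivity
  set c : ℝ := (G + 1) * N with hc
  have hc0 : 0 ≤ c := by positivity
  have key : ∀ x0, 0 < x0 → x0 ≤ 1 / N →
      F (1 / N) * Real.exp (-(c * (1 / N))) ≤ F x0 * Real.exp (-(c * x0)) + k * 1 * (1 / N - x0) := by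
    intro x0 hx0 hx1
    have hsub : ∀ x ∈ Set.Icc x0 (1 / N), x ∈ Set.Ioc 0 (π / 2) := fun x hx =>
      ⟨lt_of_lt_of_le hx0 hx.1, hx.2.trans hN1⟩
    apply djo_gronwall F (fun x => 2 * e x * (-(2 * ν / x) * e x - N ^ 2 * D x - g x * (D x + W x))
      + N ^ 2 * (2 * D x * e x)) (fun x => c * x) (fun _ => c) k 1 x0 (1 / N) hx1 hk
    · intro x hx
      have h1 := (he x (hsub x hx)).pow 2
      have h2 := ((hD x (hsub x hx)).pow 2).const_mul (N ^ 2)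
      exact (h1.add h2).congr_deriv (by push_cast; ring)
    · intro x hx
      simpa using (hasDerivAt_id x).const_mul c
    · intro x hx
      have hx' := hsub x hx
      have hgx := hg x hx'
      have hWx := hW x hx'
      have h1 : 0 ≤ 4 * ν / x * e x ^ 2 := by
        have := hx'.1
        positivity
      have hE : |e x| ^ 2 = e x ^ 2 := sq_abs _
      have hDD : |D x| ^ 2 = D x ^ 2 := sq_abs _
      have h2 : -(2 * (e x * (g x * D x))) ≤ G * (2 * (|e x| * |D x|)) := by
        have : -(e x * (g x * D x)) ≤ |e x * (g x * D x)| := neg_le_abs _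
        rw [abs_mul, abs_mul] at this
        have h3 : |e x| * (|g x| * |D x|) ≤ |e x| * (G * |D x|) := by gcongr
        nlinarith
      have h3 : -(2 * (e x * (g x * W x))) ≤ 2 * (|e x| * (G * K)) := by
        have : -(e x * (g x * W x)) ≤ |e x * (g x * W x)| := neg_le_abs _
        rw [abs_mul, abs_mul] at this
        have h3 : |e x| * (|g x| * |W x|) ≤ |e x| * (G * K) := by gcongr
        nlinarith
      have h4 : 2 * (|e x| * |D x|) ≤ N * F x := by
        have : 2 * (|e x| * (N * |D x|)) ≤ F x := by
          simp only [hFdef]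
          rw [← hE, ← hDD]
          nlinarith [sq_nonneg (|e x| - N * |D x|)]
        have hp : 0 ≤ |e x| * |D x| := by positivity
        have hFx : 0 ≤ F x := by simp only [hFdef]; positivity
        nlinarith
      have h5 : 2 * (|e x| * (G * K)) ≤ N * F x + k := by
        have hz : 0 ≤ (N * |e x| - G * K) ^ 2 / N := by positivity
        have he1 : (N * |e x| - G * K) ^ 2 / N = N * |e x| ^ 2 - 2 * (|e x| * (G * K)) + k := by
          rw [hkdef]; field_simp; ring
        rw [he1, hE] at hz
        have : N * F x = N * e x ^ 2 + N * (N ^ 2 * D x ^ 2) := by simp only [hFdef]; ring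
        have : 0 ≤ N * (N ^ 2 * D x ^ 2) := by positivity
        linarith
      have h6 : G * (2 * (|e x| * |D x|)) ≤ G * (N * F x) := mul_le_mul_of_nonneg_left h4 hG
      have h7 : 2 * e x * (-(2 * ν / x) * e x - N ^ 2 * D x - g x * (D x + W x))
        + N ^ 2 * (2 * D x * e x) = -(4 * ν / x * e x ^ 2) + -(2 * (e x * (g x * D x)))
          + -(2 * (e x * (g x * W x))) := by ring
      rw [h7, hc]
      linarith
    · intro x hx
      rw [Real.exp_le_one_iff]
      have := (hsub x hx).1
      simp only [Left.neg_nonpos_iff]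
      positivity
  have hlim : F (1 / N) * Real.exp (-(c * (1 / N))) ≤ k * (1 / N) := by
    have ht : Filter.Tendsto (fun x0 => F x0 * Real.exp (-(c * x0)) + k * 1 * (1 / N - x0))
        (nhdsWithin 0 (Set.Ioi 0)) (nhds (0 * Real.exp (-(c * 0)) + k * 1 * (1 / N - 0))) := by
      apply Filter.Tendsto.add
      · apply h0.mul
        apply tendsto_nhdsWithin_of_tendsto_nhds
        apply Continuous.tendsto
        fun_prop
      · apply tendsto_nhdsWithin_of_tendsto_nhds
        apply Continuous.tendsto (f := fun x0 => k * 1 * (1 / N - x0))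
        fun_prop
    have := ge_of_tendsto ht (b := F (1 / N) * Real.exp (-(c * (1 / N)))) (by
      have hm : Set.Ioc 0 (1 / N) ∈ nhdsWithin (0 : ℝ) (Set.Ioi 0) :=
        Ioc_mem_nhdsGT (by positivity)
      filter_upwards [hm] with x hx
      exact key x hx.1 hx.2)
    simpa using this
  have hcN : c * (1 / N) = G + 1 := by rw [hc]; field_simp
  rw [hcN] at hlim
  have h8 : F (1 / N) = (F (1 / N) * Real.exp (-(G + 1))) * Real.exp (G + 1) := by
    rw [mul_assoc, ← Real.exp_add]; simp
  rw [show e (1 / N) ^ 2 + N ^ 2 * D (1 / N) ^ 2 = F (1 / N) from rfl, h8]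
  calc _ ≤ k * (1 / N) * Real.exp (G + 1) := by gcongr
    _ = _ := by rw [hkdef]; field_simp

/-- Region two. -/
lemma djo_region2 (κ G k0 N x : ℝ) (hκ0 : 0 ≤ κ) (hG : 0 ≤ G) (hk0 : 0 ≤ k0) (hN : 1 ≤ N)
    (hx : 1 / N ≤ x)
    (d d1 w g : ℝ → ℝ)
    (hdd : ∀ t ∈ Set.Icc (1 / N) x, HasDerivAt d (d1 t) t)
    (hdd1 : ∀ t ∈ Set.Icc (1 / N) x, HasDerivAt d1
      (κ / t ^ 2 * d t - N ^ 2 * d t - g t * (d t + w t)) t)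
    (hg : ∀ t ∈ Set.Icc (1 / N) x, |g t| ≤ G)
    (hw : ∀ t ∈ Set.Icc (1 / N) x, |w t| ≤ k0) :
    (d1 x ^ 2 + N ^ 2 * d x ^ 2) * Real.exp (-(-(κ / N) * x⁻¹ + (G + 1) * x)) ≤
    (d1 (1 / N) ^ 2 + N ^ 2 * d (1 / N) ^ 2) *
      Real.exp (-(-(κ / N) * (1 / N)⁻¹ + (G + 1) * (1 / N)))
        + (G * k0) ^ 2 * Real.exp κ * (x - 1 / N) := by
  have hN0 : 0 < N := by linarith
  have hsub : ∀ t ∈ Set.Icc (1 / N) x, 0 < t ∧ True := fun t ht =>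
    ⟨lt_of_lt_of_le (by positivity) ht.1, trivial⟩
  set E : ℝ → ℝ := fun t => d1 t ^ 2 + N ^ 2 * d t ^ 2 with hEE
  have hE : ∀ t, E t = d1 t ^ 2 + N ^ 2 * d t ^ 2 := fun t => rfl
  have hmain := djo_gronwall E
    (fun t => 2 * d1 t * (κ / t ^ 2 * d t - N ^ 2 * d t - g t * (d t + w t))
      + N ^ 2 * (2 * d t * d1 t)) (fun t => -(κ / N) * t⁻¹ + (G + 1) * t)
    (fun t => κ / (N * t ^ 2) + (G + 1)) ((G * k0) ^ 2) (Real.exp κ) (1 / N) x hx (by positivity)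
    (by
      intro t ht
      have h1 := (hdd1 t ht).pow 2
      have h2 := ((hdd t ht).pow 2).const_mul (N ^ 2)
      exact (h1.add h2).congr_deriv (by push_cast; ring))
    (by
      intro t ht
      have ht0 := (hsub t ht).1
      have h1 := ((hasDerivAt_inv ht0.ne').const_mul (-(κ / N))).add
        ((hasDerivAt_id t).const_mul (G + 1))
      refine h1.congr_deriv ?_
      field_simp)
    (by
      intro t ht
      have ht0 := (hsub t ht).1
      have hgt := hg t ht
      have hwt := hw t ht
      have h2 : 2 * (|d1 t| * |d t|) ≤ E t / N := by
        rw [le_div_iff₀ hN0]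
        simp only [hE]
        rw [← sq_abs (d1 t), ← sq_abs (d t)]
        nlinarith [sq_nonneg (|d1 t| - N * |d t|)]
      have hE0 : 0 ≤ E t := by simp only [hE]; positivity
      have h3 : 2 * (d1 t * (κ / t ^ 2 * d t)) ≤ κ / (N * t ^ 2) * E t := by
        have : d1 t * d t ≤ |d1 t| * |d t| := by rw [← abs_mul]; exact le_abs_self _
        have h4 : 2 * (d1 t * d t) ≤ E t / N := by linarith
        have h5 : κ / t ^ 2 * (2 * (d1 t * d t)) ≤ κ / t ^ 2 * (E t / N) := by gcongr
        calc _ = κ / t ^ 2 * (2 * (d1 t * d t)) := by ring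
          _ ≤ _ := h5
          _ = _ := by field_simp
      have h4 : -(2 * (d1 t * (g t * d t))) ≤ G * E t := by
        have : -(d1 t * (g t * d t)) ≤ |d1 t * (g t * d t)| := neg_le_abs _
        rw [abs_mul, abs_mul] at this
        have h3 : |d1 t| * (|g t| * |d t|) ≤ |d1 t| * (G * |d t|) := by gcongr
        have h5 : E t / N ≤ E t := div_le_self hE0 hN
        have h6 : G * (2 * (|d1 t| * |d t|)) ≤ G * E t := by
          apply mul_le_mul_of_nonneg_left _ hG; linarith
        nlinarith
      have h5 : -(2 * (d1 t * (g t * w t))) ≤ E t + (G * k0) ^ 2 := by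
        have h6 : |g t * w t| ≤ G * k0 := by
          rw [abs_mul]; gcongr
        have h7 : (g t * w t) ^ 2 ≤ (G * k0) ^ 2 := by
          exact sq_le_sq' (by linarith [neg_abs_le (g t * w t)]) ((le_abs_self _).trans h6)
        have h8 : d1 t ^ 2 ≤ E t := by
          simp only [hE]; nlinarith [mul_nonneg (sq_nonneg N) (sq_nonneg (d t))]
        nlinarith [sq_nonneg (d1 t + g t * w t)]
      have h9 : 2 * d1 t * (κ / t ^ 2 * d t - N ^ 2 * d t - g t * (d t + w t))
        + N ^ 2 * (2 * d t * d1 t) = 2 * (d1 t * (κ / t ^ 2 * d t)) + -(2 * (d1 t * (g t * d t)))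
          + -(2 * (d1 t * (g t * w t))) := by ring
      rw [h9]
      linarith)
    (by
      intro t ht
      have ht0 := (hsub t ht).1
      apply Real.exp_le_exp.2
      have h1 : 1 ≤ N * t := by
        have := ht.1
        rw [div_le_iff₀ hN0] at this
        linarith
      have h2 : κ / N * t⁻¹ ≤ κ := by
        rw [← div_eq_mul_inv, div_div]
        exact div_le_self hκ0 h1
      have : 0 ≤ (G + 1) * t := by positivity
      linarith)
  exact hmain

set_option maxHeartbeats 1000000 in
/-- The comparison lemma. -/
lemma djo_compare (ν G K : ℝ) (hν : 1 ≤ ν) (hG : 0 ≤ G) (hK : 0 ≤ K) :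
    ∃ C : ℝ, 0 < C ∧ ∀ (N : ℝ) (D e W g : ℝ → ℝ), 1 ≤ N →
    (∀ x ∈ Set.Ioc 0 (π / 2), HasDerivAt D (e x) x) →
    (∀ x ∈ Set.Ioc 0 (π / 2),
      HasDerivAt e (-(2 * ν / x) * e x - N ^ 2 * D x - g x * (D x + W x)) x) →
    (∀ x ∈ Set.Ioc 0 (π / 2), |g x| ≤ G) →
    (∀ x ∈ Set.Ioc 0 (π / 2), |W x| ≤ K) →
    (∀ x ∈ Set.Icc (1 / N) (π / 2), |x ^ ν * W x| ≤ K * N ^ (-ν)) →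
    Filter.Tendsto (fun x => e x ^ 2 + N ^ 2 * D x ^ 2) (nhdsWithin 0 (Set.Ioi 0)) (nhds 0) →
    ∀ x ∈ Set.Icc (1 / N) (π / 2), |x ^ ν * D x| ≤ C * N ^ (-ν) / N := by
  set κ : ℝ := ν * (ν - 1) with hκ
  have hκ0 : 0 ≤ κ := mul_nonneg (by linarith) (by linarith)
  set A : ℝ := Real.exp (G + 1) * (G ^ 2 * K ^ 2) with hA
  have hA0 : 0 ≤ A := by positivity
  set B : ℝ := Real.exp (2 * (G + 1)) * (Real.exp κ * ((2 * ν ^ 2 + 2) * A)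
    + G ^ 2 * K ^ 2 * Real.exp κ * 2) with hB
  have hB0 : 0 ≤ B := by positivity
  refine ⟨Real.sqrt B + 1, by positivity, ?_⟩
  intro N D e W g hN hD he hg hW hw h0 x hx
  have hN0 : 0 < N := by linarith
  have hR1 := djo_region1 ν G K N hν hG hK hN D e W g hD he hg hW h0
  rw [← hA] at hR1
  have hsub : ∀ t ∈ Set.Icc (1 / N) x, t ∈ Set.Ioc 0 (π / 2) := fun t ht =>
    ⟨lt_of_lt_of_le (by positivity) ht.1, ht.2.trans hx.2⟩
  set d : ℝ → ℝ := fun t => t ^ ν * D t with hd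
  set d1 : ℝ → ℝ := fun t => t ^ ν * (e t + ν * D t / t) with hd1
  have hdd : ∀ t ∈ Set.Icc (1 / N) x, HasDerivAt d (d1 t) t := by
    intro t ht
    have ht0 := (hsub t ht).1
    have h1 := (Real.hasDerivAt_rpow_const (x := t) (p := ν) (Or.inl ht0.ne')).mul (hD t (hsub t ht))
    refine h1.congr_deriv ?_
    rw [Real.rpow_sub_one ht0.ne']
    simp only [hd1]
    field_simp
    ring
  have hdd1 : ∀ t ∈ Set.Icc (1 / N) x, HasDerivAt d1
      (κ / t ^ 2 * d t - N ^ 2 * d t - g t * (d t + t ^ ν * W t)) t := by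
    intro t ht
    have ht0 := (hsub t ht).1
    have h1 := (Real.hasDerivAt_rpow_const (x := t) (p := ν) (Or.inl ht0.ne')).mul
      ((he t (hsub t ht)).add ((((hD t (hsub t ht)).const_mul ν).div (hasDerivAt_id t) ht0.ne')))
    refine h1.congr_deriv ?_
    simp only [hd, hκ, id, Pi.add_apply, Pi.div_apply]
    rw [Real.rpow_sub_one ht0.ne']
    field_simp
    ring
  set E : ℝ → ℝ := fun t => d1 t ^ 2 + N ^ 2 * d t ^ 2 with hE
  set k : ℝ := (G * (K * N ^ (-ν))) ^ 2 with hk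
  have hmain : E x * Real.exp (-(-(κ / N) * x⁻¹ + (G + 1) * x)) ≤
    E (1 / N) * Real.exp (-(-(κ / N) * (1 / N)⁻¹ + (G + 1) * (1 / N)))
        + k * Real.exp κ * (x - 1 / N) :=
    djo_region2 κ G (K * N ^ (-ν)) N x hκ0 hG (by positivity) hN hx.1 d d1 (fun t => t ^ ν * W t) g
      hdd hdd1 (fun t ht => hg t (hsub t ht)) (fun t ht => hw t ⟨ht.1, ht.2.trans hx.2⟩)
  have hx0 : 0 < x := lt_of_lt_of_le (by positivity) hx.1
  have hNN : (0:ℝ) < N ^ (-ν) := Real.rpow_pos_of_pos hN0 _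
  have hpow : ((1 / N) ^ ν : ℝ) = N ^ (-ν) := by
    rw [one_div, Real.inv_rpow hN0.le, Real.rpow_neg hN0.le]
  have hE1 : E (1 / N) ≤ (N ^ (-ν)) ^ 2 * ((2 * ν ^ 2 + 2) * A) := by
    have h1 : E (1 / N) = (N ^ (-ν)) ^ 2 * ((e (1 / N) + ν * (N * D (1 / N))) ^ 2
        + (N * D (1 / N)) ^ 2) := by
      simp only [hE, hd, hd1, hpow]
      field_simp
    have h2 : A / N ^ 2 ≤ A := div_le_self hA0 (by nlinarith)
    rw [h1]
    apply mul_le_mul_of_nonneg_left _ (by positivity)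
    have h3 : e (1 / N) ^ 2 + (N * D (1 / N)) ^ 2 ≤ A := by
      calc _ = e (1 / N) ^ 2 + N ^ 2 * D (1 / N) ^ 2 := by ring
        _ ≤ _ := hR1
        _ ≤ _ := h2
    set p := e (1 / N)
    set q := N * D (1 / N)
    have h4 : (p + ν * q) ^ 2 + q ^ 2 ≤ (2 * ν ^ 2 + 2) * (p ^ 2 + q ^ 2) := by
      nlinarith [sq_nonneg (p - ν * q), mul_nonneg (sq_nonneg ν) (sq_nonneg p), sq_nonneg q]
    exact h4.trans (mul_le_mul_of_nonneg_left h3 (by positivity))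
  have hexp0 : Real.exp (-(-(κ / N) * (1 / N)⁻¹ + (G + 1) * (1 / N))) ≤ Real.exp κ := by
    apply Real.exp_le_exp.2
    have : κ / N * (1 / N)⁻¹ = κ := by field_simp
    have h2 : 0 ≤ (G + 1) * (1 / N) := by positivity
    linarith
  have hexp1 : Real.exp (-(κ / N) * x⁻¹ + (G + 1) * x) ≤ Real.exp (2 * (G + 1)) := by
    apply Real.exp_le_exp.2
    have : 0 ≤ κ / N * x⁻¹ := by positivity
    have h2 : x ≤ 2 := by linarith [hx.2, Real.pi_le_four]
    have h3 : (G + 1) * x ≤ (G + 1) * 2 := mul_le_mul_of_nonneg_left h2 (by linarith)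
    linarith
  have hE1' : 0 ≤ E (1 / N) := by simp only [hE]; positivity
  have hEx : E x ≤ B * (N ^ (-ν)) ^ 2 := by
    have h1 : E x = (E x * Real.exp (-(-(κ / N) * x⁻¹ + (G + 1) * x)))
        * Real.exp (-(κ / N) * x⁻¹ + (G + 1) * x) := by
      rw [mul_assoc, ← Real.exp_add]; simp
    rw [h1]
    have h2 : E (1 / N) * Real.exp (-(-(κ / N) * (1 / N)⁻¹ + (G + 1) * (1 / N)))
        + k * Real.exp κ * (x - 1 / N) ≤ (N ^ (-ν)) ^ 2 * ((2 * ν ^ 2 + 2) * A) * Real.exp κ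
        + k * Real.exp κ * 2 := by
      gcongr
      have : 0 ≤ 1 / N := by positivity
      linarith [hx.2, Real.pi_le_four]
    calc _ ≤ ((N ^ (-ν)) ^ 2 * ((2 * ν ^ 2 + 2) * A) * Real.exp κ
        + k * Real.exp κ * 2) * Real.exp (2 * (G + 1)) := by
          apply mul_le_mul (hmain.trans h2) hexp1 (Real.exp_pos _).le (by positivity)
      _ = _ := by rw [hk, hB]; ring
  have h3 : (N * d x) ^ 2 ≤ B * (N ^ (-ν)) ^ 2 := by
    have : (N * d x) ^ 2 ≤ E x := by simp only [hE]; nlinarith [sq_nonneg (d1 x)]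
    linarith
  have h4 : |N * d x| ≤ Real.sqrt B * N ^ (-ν) := by
    rw [← Real.sqrt_sq_eq_abs]
    calc _ ≤ Real.sqrt (B * (N ^ (-ν)) ^ 2) := Real.sqrt_le_sqrt h3
      _ = _ := by rw [Real.sqrt_mul hB0, Real.sqrt_sq hNN.le]
  rw [abs_mul, abs_of_pos hN0] at h4
  rw [le_div_iff₀ hN0]
  change |d x| * N ≤ _
  linarith

/-! ### Part 2: algebra of Jacobi polynomials -/

/-- Coefficients of the Jacobi polynomial. -/
noncomputable def djoC (a b : ℝ) (n s : ℕ) : ℝ :=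
  (Real.Gamma ((n : ℝ) + a + 1) /
        (Real.Gamma ((s : ℝ) + a + 1) * (Nat.factorial (n - s) : ℝ))) *
      (Real.Gamma ((n : ℝ) + b + 1) /
        (Real.Gamma ((n : ℝ) - (s : ℝ) + b + 1) * (Nat.factorial s : ℝ)))

lemma djo_jacobiP_eq (a b : ℝ) (n : ℕ) (x : ℝ) :
    jacobiP a b n x = ∑ s ∈ Finset.range (n + 1),
      djoC a b n s * (((x - 1) / 2) ^ s * ((x + 1) / 2) ^ (n - s)) := by
  unfold jacobiP djoC
  apply Finset.sum_congr rfl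
  intro s _
  ring

lemma djo_C_succ (a b : ℝ) (ha : -1 < a) (hb : -1 < b) (n s : ℕ) (hs : s < n) :
    djoC a b n (s + 1) * ((s : ℝ) + 1 + a) * ((s : ℝ) + 1) =
      djoC a b n s * ((n : ℝ) - s + b) * ((n : ℝ) - s) := by
  obtain ⟨m, rfl⟩ : ∃ m, n = s + 1 + m := ⟨n - (s + 1), by omega⟩
  unfold djoC
  rw [show s + 1 + m - (s + 1) = m by omega, show s + 1 + m - s = m + 1 by omega,
    Nat.factorial_succ, Nat.factorial_succ]
  have hm : (0:ℝ) ≤ m := Nat.cast_nonneg m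
  have hs0 : (0:ℝ) ≤ s := Nat.cast_nonneg s
  have h1 : Real.Gamma (((s + 1 : ℕ) : ℝ) + a + 1) = ((s:ℝ) + a + 1) * Real.Gamma ((s : ℝ) + a + 1) := by
    rw [← Real.Gamma_add_one (by linarith)]; push_cast; congr 1; ring
  have h2 : Real.Gamma (((s + 1 + m : ℕ) : ℝ) - s + b + 1) =
      ((m:ℝ) + b + 1) * Real.Gamma (((s + 1 + m : ℕ) : ℝ) - ((s + 1 : ℕ) : ℝ) + b + 1) := by
    push_cast
    rw [show ((s:ℝ) + 1 + m - (s + 1) + b + 1) = m + b + 1 by ring,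
      ← Real.Gamma_add_one (by linarith)]; congr 1; ring
  rw [h1, h2]
  have g1 : Real.Gamma ((s : ℝ) + a + 1) ≠ 0 := (Real.Gamma_pos_of_pos (by linarith)).ne'
  have g2 : Real.Gamma (((s + 1 + m : ℕ) : ℝ) - ((s + 1 : ℕ) : ℝ) + b + 1) ≠ 0 := by
    push_cast
    exact (Real.Gamma_pos_of_pos (by linarith)).ne'
  generalize Real.Gamma (((s + 1 + m : ℕ) : ℝ) - ((s + 1 : ℕ) : ℝ) + b + 1) = G2 at *
  generalize Real.Gamma ((s : ℝ) + a + 1) = G1 at *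
  generalize Real.Gamma (((s + 1 + m : ℕ) : ℝ) + a + 1) = G3
  generalize Real.Gamma (((s + 1 + m : ℕ) : ℝ) + b + 1) = G4
  have f1 : (m.factorial : ℝ) ≠ 0 := by positivity
  have f2 : (s.factorial : ℝ) ≠ 0 := by positivity
  have e1 : (s:ℝ) + a + 1 ≠ 0 := by linarith
  have e2 : (m:ℝ) + b + 1 ≠ 0 := by linarith
  have e3 : (s:ℝ) + 1 ≠ 0 := by linarith
  have e4 : (m:ℝ) + 1 ≠ 0 := by linarith
  push_cast
  field_simp
  ring

/-- First derivative of the Jacobi polynomial. -/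
noncomputable def djoP1 (a b : ℝ) (n : ℕ) (x : ℝ) : ℝ :=
  ∑ s ∈ Finset.range (n + 1), djoC a b n s * (1 / 2 *
    (((s : ℝ) * ((x - 1) / 2) ^ (s - 1)) * ((x + 1) / 2) ^ (n - s)
     + ((x - 1) / 2) ^ s * (((n - s : ℕ) : ℝ) * ((x + 1) / 2) ^ (n - s - 1))))

/-- Second derivative of the Jacobi polynomial. -/
noncomputable def djoP2 (a b : ℝ) (n : ℕ) (x : ℝ) : ℝ :=
  ∑ s ∈ Finset.range (n + 1), djoC a b n s * (1 / 4 *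
    (((s : ℝ) * (((s - 1 : ℕ) : ℝ) * ((x - 1) / 2) ^ (s - 1 - 1))) * ((x + 1) / 2) ^ (n - s)
     + 2 * (((s : ℝ) * ((x - 1) / 2) ^ (s - 1)) * (((n - s : ℕ) : ℝ) * ((x + 1) / 2) ^ (n - s - 1)))
     + ((x - 1) / 2) ^ s * (((n - s : ℕ) : ℝ) *
        (((n - s - 1 : ℕ) : ℝ) * ((x + 1) / 2) ^ (n - s - 1 - 1)))))

lemma djo_pow_deriv_m (k : ℕ) (x : ℝ) :
    HasDerivAt (fun x : ℝ => ((x - 1) / 2) ^ k) (1 / 2 * ((k : ℝ) * ((x - 1) / 2) ^ (k - 1))) x := by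
  have h := (((hasDerivAt_id x).sub_const 1).div_const 2).pow k
  exact h.congr_deriv (by simp only [id]; ring)

lemma djo_pow_deriv_p (k : ℕ) (x : ℝ) :
    HasDerivAt (fun x : ℝ => ((x + 1) / 2) ^ k) (1 / 2 * ((k : ℝ) * ((x + 1) / 2) ^ (k - 1))) x := by
  have h := (((hasDerivAt_id x).add_const 1).div_const 2).pow k
  exact h.congr_deriv (by simp only [id]; ring)

lemma djo_hasDeriv (a b : ℝ) (n : ℕ) (x : ℝ) :
    HasDerivAt (jacobiP a b n) (djoP1 a b n x) x := by
  have : jacobiP a b n = fun x => ∑ s ∈ Finset.range (n + 1),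
      djoC a b n s * (((x - 1) / 2) ^ s * ((x + 1) / 2) ^ (n - s)) := by
    funext y; exact djo_jacobiP_eq a b n y
  rw [this]
  unfold djoP1
  apply HasDerivAt.fun_sum
  intro s _
  have h := ((djo_pow_deriv_m s x).mul (djo_pow_deriv_p (n - s) x)).const_mul (djoC a b n s)
  exact h.congr_deriv (by ring)

lemma djo_hasDeriv1 (a b : ℝ) (n : ℕ) (x : ℝ) :
    HasDerivAt (djoP1 a b n) (djoP2 a b n x) x := by
  unfold djoP2
  change HasDerivAt (fun x => djoP1 a b n x) _ x
  unfold djoP1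
  apply HasDerivAt.fun_sum
  intro s _
  have h1 := ((djo_pow_deriv_m (s - 1) x).const_mul (s : ℝ)).mul (djo_pow_deriv_p (n - s) x)
  have h2 := (djo_pow_deriv_m s x).mul ((djo_pow_deriv_p (n - s - 1) x).const_mul ((n - s : ℕ) : ℝ))
  have h := ((h1.add h2).const_mul (1 / 2 : ℝ)).const_mul (djoC a b n s)
  exact h.congr_deriv (by ring)

lemma djo_pow_aux1 (p : ℝ) (s : ℕ) : p * ((s : ℝ) * p ^ (s - 1)) = s * p ^ s := by
  cases s with
  | zero => simp
  | succ k => simp only [Nat.add_sub_cancel]; ring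

lemma djo_pow_aux2 (p : ℝ) (s : ℕ) :
    p * ((s : ℝ) * (((s - 1 : ℕ) : ℝ) * p ^ (s - 1 - 1))) = ((s : ℝ) - 1) * (s * p ^ (s - 1)) := by
  cases s with
  | zero => simp
  | succ k =>
    have := djo_pow_aux1 p k
    simp only [Nat.add_sub_cancel]
    push_cast
    linear_combination ((k : ℝ) + 1) * this

lemma djo_ode (a b : ℝ) (ha : -1 < a) (hb : -1 < b) (n : ℕ) (x : ℝ) :
    (1 - x ^ 2) * djoP2 a b n x + (b - a - (a + b + 2) * x) * djoP1 a b n x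
      + n * (n + a + b + 1) * jacobiP a b n x = 0 := by
  set p := (x - 1) / 2 with hp
  set q := (x + 1) / 2 with hq
  have hx : x = p + q := by rw [hp, hq]; ring
  have hpq : q - p = 1 := by rw [hp, hq]; ring
  set A : ℕ → ℝ := fun s => djoC a b n s * ((s : ℝ) + a) * ((s : ℝ) * p ^ (s - 1)) * q ^ (n - s) with hA
  have hterm : ∀ s ∈ Finset.range (n + 1),
      (1 - x ^ 2) * (djoC a b n s * (1 / 4 *
    (((s : ℝ) * (((s - 1 : ℕ) : ℝ) * p ^ (s - 1 - 1))) * q ^ (n - s)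
     + 2 * (((s : ℝ) * p ^ (s - 1)) * (((n - s : ℕ) : ℝ) * q ^ (n - s - 1)))
     + p ^ s * (((n - s : ℕ) : ℝ) * (((n - s - 1 : ℕ) : ℝ) * q ^ (n - s - 1 - 1))))))
     + (b - a - (a + b + 2) * x) * (djoC a b n s * (1 / 2 *
    (((s : ℝ) * p ^ (s - 1)) * q ^ (n - s) + p ^ s * (((n - s : ℕ) : ℝ) * q ^ (n - s - 1)))))
     + n * (n + a + b + 1) * (djoC a b n s * (p ^ s * q ^ (n - s)))
     = djoC a b n s * (((n : ℝ) - s) + b) * p ^ s * (((n - s : ℕ) : ℝ) * q ^ (n - s - 1)) - A s := by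
    intro s hs
    have hsn : s ≤ n := Nat.lt_succ_iff.1 (Finset.mem_range.1 hs)
    obtain ⟨m, rfl⟩ : ∃ m, n = s + m := ⟨n - s, by omega⟩
    simp only [hA, Nat.add_sub_cancel_left]
    have e1 := djo_pow_aux1 p s
    have e2 := djo_pow_aux2 p s
    have e3 := djo_pow_aux1 q m
    have e4 := djo_pow_aux2 q m
    rw [hx]
    generalize (s : ℝ) * (((s - 1 : ℕ) : ℝ) * p ^ (s - 1 - 1)) = X2 at *
    generalize (s : ℝ) * p ^ (s - 1) = X1 at *
    generalize p ^ s = X0 at *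
    generalize (m : ℝ) * (((m - 1 : ℕ) : ℝ) * q ^ (m - 1 - 1)) = Y2 at *
    generalize (m : ℝ) * q ^ (m - 1) = Y1 at *
    generalize q ^ m = Y0 at *
    generalize djoC a b (s + m) s = c
    push_cast
    have hqq : q = p + 1 := by linarith
    clear_value p q
    subst hqq
    linear_combination (-c * (p + 1) * Y0) * e2 - c * p * X0 * e4
      + c * (-2 * (p + 1) * Y1 - (b + 1) * Y0 - (s + a) * Y0) * e1
      + c * (-2 * s * X0 - (a + 1) * X0 - (m + b) * X0) * e3
  have hsum : (1 - x ^ 2) * djoP2 a b n x + (b - a - (a + b + 2) * x) * djoP1 a b n x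
      + n * (n + a + b + 1) * jacobiP a b n x = ∑ s ∈ Finset.range (n + 1),
      (djoC a b n s * (((n : ℝ) - s) + b) * p ^ s * (((n - s : ℕ) : ℝ) * q ^ (n - s - 1)) - A s) := by
    rw [djo_jacobiP_eq]
    unfold djoP1 djoP2
    rw [Finset.mul_sum, Finset.mul_sum, Finset.mul_sum, ← Finset.sum_add_distrib,
      ← Finset.sum_add_distrib]
    exact Finset.sum_congr rfl hterm
  rw [hsum, Finset.sum_sub_distrib, Finset.sum_range_succ, Finset.sum_range_succ' A]
  have hA0 : A 0 = 0 := by simp [hA]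
  have hB : ∀ s ∈ Finset.range n,
      djoC a b n s * (((n : ℝ) - s) + b) * p ^ s * (((n - s : ℕ) : ℝ) * q ^ (n - s - 1)) = A (s + 1) := by
    intro s hs
    have hs' := Finset.mem_range.1 hs
    have := djo_C_succ a b ha hb n s hs'
    simp only [hA, Nat.add_sub_cancel]
    rw [show n - (s + 1) = n - s - 1 by omega, Nat.cast_sub hs'.le]
    push_cast
    linear_combination (-(p ^ s) * q ^ (n - s - 1)) * this
  rw [Finset.sum_congr rfl hB, hA0]
  simp

lemma djo_C_pos_aux (a b : ℝ) (ha : -1 < a) (hb : -1 < b) (n : ℕ) :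
    jacobiP a b n 1 = Real.Gamma ((n : ℝ) + a + 1) / (Real.Gamma (a + 1) * Real.Gamma ((n : ℝ) + 1)) := by
  rw [djo_jacobiP_eq, Finset.sum_range_succ']
  have : ∀ s ∈ Finset.range n, djoC a b n (s + 1) *
      (((1 : ℝ) - 1) / 2) ^ (s + 1) * (((1:ℝ) + 1) / 2) ^ (n - (s + 1)) = 0 := by
    intro s _; simp
  simp only [← mul_assoc]
  rw [Finset.sum_eq_zero this]
  unfold djoC
  have h1 : (Real.Gamma ((n:ℝ) + b + 1)) ≠ 0 :=
    (Real.Gamma_pos_of_pos (by have : (0:ℝ) ≤ n := Nat.cast_nonneg n; linarith)).ne'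
  rw [Real.Gamma_nat_eq_factorial]
  simp [h1]

/-- The contiguous relation. -/
lemma djo_contig (α β : ℝ) (hα : -1 < α) (hβ : -1 < β) (n : ℕ) (x : ℝ) :
    (2 * ((n + 1 : ℕ) : ℝ) + α + β + 1) * jacobiP α β (n + 1) x =
      (((n + 1 : ℕ) : ℝ) + α + β + 1) * jacobiP (α + 1) β (n + 1) x
        - (((n + 1 : ℕ) : ℝ) + β) * jacobiP (α + 1) β n x := by
  set p := (x - 1) / 2 with hp
  set q := (x + 1) / 2 with hq
  have hpq : q - p = 1 := by rw [hp, hq]; ring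
  have hlow : jacobiP (α + 1) β n x =
      ∑ s ∈ Finset.range (n + 2), (if s < n + 1 then djoC (α + 1) β n s else 0) * (p ^ s * q ^ (n + 1 - s))
      - ∑ s ∈ Finset.range (n + 2), (if 0 < s then djoC (α + 1) β n (s - 1) else 0) * (p ^ s * q ^ (n + 1 - s)) := by
    rw [Finset.sum_range_succ, Finset.sum_range_succ' _ (n + 1)]
    simp only [lt_irrefl, if_false, zero_mul, add_zero, Nat.add_sub_cancel, Nat.succ_pos, if_true,
      Nat.add_sub_add_right]
    rw [← Finset.sum_sub_distrib, djo_jacobiP_eq]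
    apply Finset.sum_congr rfl
    intro s hs
    have hs' := Finset.mem_range.1 hs
    rw [if_pos hs', show n + 1 - s = n - s + 1 by omega, pow_succ, pow_succ]
    rw [← hp, ← hq]
    linear_combination (-(djoC (α + 1) β n s * (p ^ s * q ^ (n - s)))) * hpq
  rw [hlow, djo_jacobiP_eq, djo_jacobiP_eq, Finset.mul_sum, Finset.mul_sum, ← Finset.sum_sub_distrib,
    Finset.mul_sum, ← Finset.sum_sub_distrib]
  apply Finset.sum_congr rfl
  intro s hs
  have hs' : s ≤ n + 1 := Nat.lt_succ_iff.1 (Finset.mem_range.1 hs)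
  rw [← hp, ← hq]
  suffices h : (2 * ((n + 1 : ℕ) : ℝ) + α + β + 1) * djoC α β (n + 1) s =
      (((n + 1 : ℕ) : ℝ) + α + β + 1) * djoC (α + 1) β (n + 1) s - (((n + 1 : ℕ) : ℝ) + β) *
      ((if s < n + 1 then djoC (α + 1) β n s else 0) - (if 0 < s then djoC (α + 1) β n (s - 1) else 0)) by
    linear_combination (p ^ s * q ^ (n + 1 - s)) * h
  have hn0 : (0:ℝ) ≤ n := Nat.cast_nonneg n
  have hs0 : (0:ℝ) ≤ s := Nat.cast_nonneg s
  set N : ℝ := ((n + 1 : ℕ) : ℝ) with hN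
  have hNn : (n : ℝ) = N - 1 := by rw [hN]; push_cast; ring
  have hsN : (s : ℝ) ≤ N := by rw [hN]; exact_mod_cast hs'
  set E : ℝ := Real.Gamma (N + α + 1) * Real.Gamma (N + β + 1) /
    (Real.Gamma (s + α + 2) * Nat.factorial (n + 1 - s) * (Real.Gamma (N - s + β + 1) * Nat.factorial s)) with hE
  have gs : Real.Gamma (s + α + 1) ≠ 0 := (Real.Gamma_pos_of_pos (by linarith)).ne'
  have gs2 : Real.Gamma (s + α + 2) = (s + α + 1) * Real.Gamma (s + α + 1) := by
    rw [← Real.Gamma_add_one (by linarith)]; congr 1; ring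
  have gN : Real.Gamma (N - s + β + 1) ≠ 0 := (Real.Gamma_pos_of_pos (by linarith)).ne'
  have ff : ((n + 1 - s).factorial : ℝ) ≠ 0 := by positivity
  have fs : (s.factorial : ℝ) ≠ 0 := by positivity
  have es : (s:ℝ) + α + 1 ≠ 0 := by linarith
  have hgN : Real.Gamma (N + α + 1 + 1) = (N + α + 1) * Real.Gamma (N + α + 1) :=
    Real.Gamma_add_one (by linarith)
  have hgN' : Real.Gamma (N + β + 1) = (N + β) * Real.Gamma (N + β) :=
    Real.Gamma_add_one (by linarith)
  have h1 : djoC α β (n + 1) s = (s + α + 1) * E := by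
    unfold djoC
    rw [hE, ← hN, gs2]
    field_simp
  have h2 : djoC (α + 1) β (n + 1) s = (N + α + 1) * E := by
    unfold djoC
    rw [hE, ← hN, show N + (α + 1) + 1 = N + α + 1 + 1 by ring,
      show (s:ℝ) + (α + 1) + 1 = s + α + 2 by ring, hgN]
    field_simp
  have h3 : (N + β) * (if s < n + 1 then djoC (α + 1) β n s else 0) = (N - s) * (N - s + β) * E := by
    split_ifs with h
    · unfold djoC
      have hfac : ((n + 1 - s).factorial : ℝ) = (N - s) * ((n - s).factorial : ℝ) := by
        rw [show n + 1 - s = n - s + 1 by omega, Nat.factorial_succ]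
        push_cast
        rw [Nat.cast_sub (by omega), hNn]; ring
      have hNs : 0 < N - s := by
        have : (s:ℝ) < N := by rw [hN]; exact_mod_cast h
        linarith
      have hsN1 : (s:ℝ) + 1 ≤ N := by rw [hN]; exact_mod_cast h
      have hg : Real.Gamma (N - s + β + 1) = (N - s + β) * Real.Gamma (N - s + β) :=
        Real.Gamma_add_one (by linarith)
      have gp : Real.Gamma (N - s + β) ≠ 0 := (Real.Gamma_pos_of_pos (by linarith)).ne'
      have ff' : ((n - s).factorial : ℝ) ≠ 0 := by positivity
      have g5 : Real.Gamma (s + α + 2) ≠ 0 := (Real.Gamma_pos_of_pos (by linarith)).ne'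
      have e6 : N - s + β ≠ 0 := by linarith
      rw [hE, hfac, hg, hNn, show N - 1 + (α + 1) + 1 = N + α + 1 by ring,
        show (s:ℝ) + (α + 1) + 1 = s + α + 2 by ring, show N - 1 + β + 1 = N + β by ring,
        show N - 1 - s + β + 1 = N - s + β by ring, hgN']
      have hNs' := hNs.ne'
      field_simp
    · have : (s:ℝ) = N := by rw [hN]; exact_mod_cast (by omega : s = n + 1)
      rw [this]; ring
  have h4 : (N + β) * (if 0 < s then djoC (α + 1) β n (s - 1) else 0) = s * (s + α + 1) * E := by
    split_ifs with h
    · obtain ⟨t, rfl⟩ : ∃ t, s = t + 1 := ⟨s - 1, by omega⟩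
      unfold djoC
      simp only [Nat.add_sub_cancel]
      rw [hE, hNn, gs2, hgN', Nat.factorial_succ]
      rw [show n + 1 - (t + 1) = n - t by omega] at ff ⊢
      push_cast at gs gN es ⊢
      rw [show N - 1 + (α + 1) + 1 = N + α + 1 by ring,
        show (t:ℝ) + (α + 1) + 1 = t + 1 + α + 1 by ring, show N - 1 + β + 1 = N + β by ring,
        show N - 1 - t + β + 1 = N - (t + 1) + β + 1 by ring]
      have ft : (t.factorial : ℝ) ≠ 0 := by positivity
      have ht1 : (t:ℝ) + 1 ≠ 0 := by positivity
      field_simp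
    · have : (s:ℝ) = 0 := by exact_mod_cast (by omega : s = 0)
      rw [this]; ring
  rw [mul_sub, h1, h2, h3, h4]
  ring

/-- Closed form of the kernel at one. -/
lemma djo_kernel (α β : ℝ) (hα : -(1 / 2) < α) (hβ : -(1 / 2) < β) (L : ℕ) (x : ℝ) :
    dirichletJ α β L 1 x = (2 : ℝ) ^ (-(α + β + 1)) / Real.Gamma (α + 1) *
      (Real.Gamma ((L : ℝ) + α + β + 2) / Real.Gamma ((L : ℝ) + β + 1)) * jacobiP (α + 1) β L x := by
  have hG1 : Real.Gamma (α + 1) ≠ 0 := (Real.Gamma_pos_of_pos (by linarith)).ne'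
  have hterm : ∀ ℓ : ℕ, (jacobiM α β ℓ)⁻¹ * jacobiP α β ℓ 1 =
      (2 : ℝ) ^ (-(α + β + 1)) / Real.Gamma (α + 1) * ((2 * ℓ + α + β + 1) *
       (Real.Gamma ((ℓ : ℝ) + α + β + 1) / Real.Gamma ((ℓ : ℝ) + β + 1))) := by
    intro ℓ
    have h0 : (0:ℝ) ≤ ℓ := Nat.cast_nonneg ℓ
    rw [djo_C_pos_aux α β (by linarith) (by linarith)]
    unfold jacobiM
    have g1 : Real.Gamma ((ℓ : ℝ) + α + 1) ≠ 0 := (Real.Gamma_pos_of_pos (by linarith)).ne'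
    have g2 : Real.Gamma ((ℓ : ℝ) + β + 1) ≠ 0 := (Real.Gamma_pos_of_pos (by linarith)).ne'
    have g3 : Real.Gamma ((ℓ : ℝ) + 1) ≠ 0 := (Real.Gamma_pos_of_pos (by linarith)).ne'
    have g4 : Real.Gamma ((ℓ : ℝ) + α + β + 1) ≠ 0 := (Real.Gamma_pos_of_pos (by linarith)).ne'
    have e1 : (2 * ℓ + α + β + 1 : ℝ) ≠ 0 := by linarith
    rw [Real.rpow_neg (by norm_num)]
    have e2 : (2:ℝ) ^ (α + β + 1) ≠ 0 := (Real.rpow_pos_of_pos (by norm_num) _).ne'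
    field_simp
  induction L with
  | zero =>
    have h1 : jacobiP α β 0 x = 1 := by
      have g1 : Real.Gamma (α + 1) ≠ 0 := (Real.Gamma_pos_of_pos (by linarith)).ne'
      have g2 : Real.Gamma (β + 1) ≠ 0 := (Real.Gamma_pos_of_pos (by linarith)).ne'
      simp [jacobiP, g1, g2]
    have h2 : jacobiP (α + 1) β 0 x = 1 := by
      have g1 : Real.Gamma (α + 1 + 1) ≠ 0 := (Real.Gamma_pos_of_pos (by linarith)).ne'
      have g2 : Real.Gamma (β + 1) ≠ 0 := (Real.Gamma_pos_of_pos (by linarith)).ne'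
      simp [jacobiP, g1, g2]
    unfold dirichletJ
    simp only [zero_add, Finset.range_one, Finset.sum_singleton]
    rw [hterm, h1, h2]
    have := Real.Gamma_add_one (s := α + β + 1) (by linarith)
    simp only [Nat.cast_zero, zero_add, mul_zero, mul_one]
    rw [show α + β + 2 = α + β + 1 + 1 by ring, this]
    ring
  | succ n ih =>
    have h0 : (0:ℝ) ≤ n := Nat.cast_nonneg n
    unfold dirichletJ at ih ⊢
    rw [Finset.sum_range_succ, ih, hterm]
    have hc := djo_contig α β (by linarith) (by linarith) n x
    have g1 : Real.Gamma (((n + 1 : ℕ) : ℝ) + α + β + 2) =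
        (((n + 1 : ℕ) : ℝ) + α + β + 1) * Real.Gamma (((n + 1 : ℕ) : ℝ) + α + β + 1) := by
      rw [← Real.Gamma_add_one (by push_cast; linarith)]; congr 1; ring
    have g2 : Real.Gamma ((n : ℝ) + α + β + 2) = Real.Gamma (((n + 1 : ℕ) : ℝ) + α + β + 1) := by
      congr 1; push_cast; ring
    have g3 : Real.Gamma (((n + 1 : ℕ) : ℝ) + β + 1) =
        (((n + 1 : ℕ) : ℝ) + β) * Real.Gamma ((n : ℝ) + β + 1) := by
      rw [show (n : ℝ) + β + 1 = ((n + 1 : ℕ) : ℝ) + β by push_cast; ring]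
      exact Real.Gamma_add_one (by push_cast; linarith)
    have g4 : Real.Gamma ((n : ℝ) + β + 1) ≠ 0 := (Real.Gamma_pos_of_pos (by linarith)).ne'
    have e1 : ((n + 1 : ℕ) : ℝ) + β ≠ 0 := by push_cast; linarith
    rw [g1, g2, g3]
    generalize Real.Gamma (((n + 1 : ℕ) : ℝ) + α + β + 1) = Q at *
    generalize Real.Gamma ((n : ℝ) + β + 1) = R at *
    generalize ((n + 1 : ℕ) : ℝ) = N at *
    field_simp
    linear_combination Q * hc

/-! ### Part 3: the Bessel-type model function -/

/-- Poisson integral. -/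
noncomputable def djoJ (μ z : ℝ) : ℝ := ∫ t in (-1 : ℝ)..1, Real.cos (z * t) * (1 - t ^ 2) ^ μ

/-- First derivative of the Poisson integral. -/
noncomputable def djoJ1 (μ z : ℝ) : ℝ :=
  ∫ t in (-1 : ℝ)..1, Real.sin (z * t) * (-(t * (1 - t ^ 2) ^ μ))

lemma djo_diff_cos (p : ℝ → ℝ) (hp : Continuous p) (z : ℝ) :
    HasDerivAt (fun z => ∫ t in (-1 : ℝ)..1, Real.cos (z * t) * p t)
      (∫ t in (-1 : ℝ)..1, Real.sin (z * t) * (-(t * p t))) z := by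
  refine (intervalIntegral.hasDerivAt_integral_of_dominated_loc_of_deriv_le
    (F := fun z t => Real.cos (z * t) * p t)
    (F' := fun z t => Real.sin (z * t) * (-(t * p t))) (bound := fun t => |t * p t|)
    (s := Set.univ) Filter.univ_mem ?_ ?_ ?_ ?_ ?_ ?_).2
  · exact Filter.Eventually.of_forall fun z => (by fun_prop : Continuous _).aestronglyMeasurable
  · exact (by fun_prop : Continuous fun t => Real.cos (z * t) * p t).intervalIntegrable _ _
  · exact (by fun_prop : Continuous fun t => Real.sin (z * t) * (-(t * p t))).aestronglyMeasurable
  · refine Filter.Eventually.of_forall fun t _ z _ => ?_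
    rw [norm_mul, Real.norm_eq_abs, Real.norm_eq_abs, abs_neg]
    exact mul_le_of_le_one_left (abs_nonneg _) (Real.abs_sin_le_one _)
  · exact (by fun_prop : Continuous fun t => |t * p t|).intervalIntegrable _ _
  · refine Filter.Eventually.of_forall fun t _ z _ => ?_
    have h := (((hasDerivAt_id z).mul_const t).cos).mul_const (p t)
    exact h.congr_deriv (by simp only [id]; ring)

lemma djo_diff_sin (p : ℝ → ℝ) (hp : Continuous p) (z : ℝ) :
    HasDerivAt (fun z => ∫ t in (-1 : ℝ)..1, Real.sin (z * t) * p t)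
      (∫ t in (-1 : ℝ)..1, Real.cos (z * t) * (t * p t)) z := by
  refine (intervalIntegral.hasDerivAt_integral_of_dominated_loc_of_deriv_le
    (F := fun z t => Real.sin (z * t) * p t)
    (F' := fun z t => Real.cos (z * t) * (t * p t)) (bound := fun t => |t * p t|)
    (s := Set.univ) Filter.univ_mem ?_ ?_ ?_ ?_ ?_ ?_).2
  · exact Filter.Eventually.of_forall fun z => (by fun_prop : Continuous _).aestronglyMeasurable
  · exact (by fun_prop : Continuous fun t => Real.sin (z * t) * p t).intervalIntegrable _ _
  · exact (by fun_prop : Continuous fun t => Real.cos (z * t) * (t * p t)).aestronglyMeasurable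
  · refine Filter.Eventually.of_forall fun t _ z _ => ?_
    rw [norm_mul, Real.norm_eq_abs, Real.norm_eq_abs]
    exact mul_le_of_le_one_left (abs_nonneg _) (Real.abs_cos_le_one _)
  · exact (by fun_prop : Continuous fun t => |t * p t|).intervalIntegrable _ _
  · refine Filter.Eventually.of_forall fun t _ z _ => ?_
    have h := (((hasDerivAt_id z).mul_const t).sin).mul_const (p t)
    exact h.congr_deriv (by simp only [id]; ring)

lemma djo_weight_cont (μ : ℝ) (hμ : 0 < μ) : Continuous fun t : ℝ => (1 - t ^ 2) ^ μ :=
  Continuous.rpow_const (by fun_prop) (fun _ => Or.inr hμ.le)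

lemma djo_J_deriv (μ z : ℝ) (hμ : 0 < μ) : HasDerivAt (djoJ μ) (djoJ1 μ z) z :=
  djo_diff_cos _ (djo_weight_cont μ hμ) z

lemma djo_J1_eq (μ z : ℝ) (hμ : 0 < μ) :
    2 * (μ + 1) * djoJ1 μ z = -(z * djoJ (μ + 1) z) := by
  have hc := djo_weight_cont μ hμ
  have hc1 := djo_weight_cont (μ + 1) (by linarith)
  have hd : ∀ t : ℝ, HasDerivAt (fun t => Real.sin (z * t) * (1 - t ^ 2) ^ (μ + 1))
      (z * (Real.cos (z * t) * (1 - t ^ 2) ^ (μ + 1))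
        + 2 * (μ + 1) * (Real.sin (z * t) * (-(t * (1 - t ^ 2) ^ μ)))) t := by
    intro t
    have h1 := ((hasDerivAt_id t).const_mul z).sin
    have h2 : HasDerivAt (fun t : ℝ => 1 - t ^ 2) (-(2 * t)) t := by
      have := ((hasDerivAt_id t).pow 2).const_sub 1
      exact this.congr_deriv (by simp)
    have h3 := h2.rpow_const (p := μ + 1) (Or.inr (by linarith))
    refine (h1.mul h3).congr_deriv ?_
    simp only [id, add_sub_cancel_right]
    ring
  have hi1 : IntervalIntegrable (fun t => z * (Real.cos (z * t) * (1 - t ^ 2) ^ (μ + 1))) volume (-1) 1 :=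
    (by fun_prop : Continuous _).intervalIntegrable _ _
  have hi2 : IntervalIntegrable
      (fun t => 2 * (μ + 1) * (Real.sin (z * t) * (-(t * (1 - t ^ 2) ^ μ)))) volume (-1) 1 :=
    (by fun_prop : Continuous _).intervalIntegrable _ _
  have h := intervalIntegral.integral_eq_sub_of_hasDerivAt (a := -1) (b := 1)
    (fun t _ => hd t) (hi1.add hi2)
  rw [intervalIntegral.integral_add hi1 hi2, intervalIntegral.integral_const_mul,
    intervalIntegral.integral_const_mul] at h
  have hz : ((0:ℝ)) ^ (μ + 1) = 0 := Real.zero_rpow (by linarith)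
  have he : Real.sin (z * 1) * (1 - 1 ^ 2) ^ (μ + 1)
      - Real.sin (z * (-1)) * (1 - (-1) ^ 2) ^ (μ + 1) = 0 := by norm_num [hz]
  rw [he] at h
  unfold djoJ djoJ1
  linarith

lemma djo_J1_deriv (μ z : ℝ) (hμ : 0 < μ) (hz : z ≠ 0) :
    HasDerivAt (djoJ1 μ) (-djoJ μ z - 2 * (μ + 1) / z * djoJ1 μ z) z := by
  have hc := djo_weight_cont μ hμ
  have h := djo_diff_sin (fun t => -(t * (1 - t ^ 2) ^ μ)) (by fun_prop) z
  refine h.congr_deriv ?_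
  have h1 := djo_J1_eq μ z hμ
  have h2 : 2 * (μ + 1) / z * djoJ1 μ z = -djoJ (μ + 1) z := by
    field_simp
    linarith
  rw [h2]
  unfold djoJ
  rw [← intervalIntegral.integral_neg, sub_neg_eq_add, ← intervalIntegral.integral_add
    ((by fun_prop : Continuous _).intervalIntegrable _ _)
    ((by have hc1 := djo_weight_cont (μ + 1) (by linarith); fun_prop : Continuous _).intervalIntegrable _ _)]
  apply intervalIntegral.integral_congr
  intro t ht
  rw [Set.uIcc_of_le (by norm_num)] at ht
  have h0 : 0 ≤ 1 - t ^ 2 := by nlinarith [ht.1, ht.2]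
  simp only
  rw [Real.rpow_add_one' h0 (by linarith)]
  ring

lemma djo_J_zero_pos (μ : ℝ) (hμ : 0 < μ) : 0 < djoJ μ 0 := by
  unfold djoJ
  have hc := djo_weight_cont μ hμ
  apply intervalIntegral.intervalIntegral_pos_of_pos_on
  · exact (by fun_prop : Continuous _).intervalIntegrable _ _
  · intro t ht
    have : 0 < 1 - t ^ 2 := by nlinarith [ht.1, ht.2]
    simp only [zero_mul, Real.cos_zero, one_mul]
    positivity
  · norm_num

lemma djo_J_le (μ z : ℝ) (hμ : 0 < μ) : |djoJ μ z| ≤ djoJ μ 0 := by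
  unfold djoJ
  have hc := djo_weight_cont μ hμ
  rw [← Real.norm_eq_abs]
  apply intervalIntegral.norm_integral_le_of_norm_le (by norm_num)
  · refine Filter.Eventually.of_forall fun t ht => ?_
    have : 0 ≤ 1 - t ^ 2 := by nlinarith [ht.1, ht.2]
    have h2 : 0 ≤ (1 - t ^ 2) ^ μ := Real.rpow_nonneg this _
    rw [norm_mul, Real.norm_eq_abs, Real.norm_eq_abs, abs_of_nonneg h2]
    simp only [zero_mul, Real.cos_zero]
    exact mul_le_mul_of_nonneg_right (Real.abs_cos_le_one _) h2
  · exact (by fun_prop : Continuous _).intervalIntegrable _ _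
/-! ### Part 4: asymptotics of the model function -/

/-- The contour integrand. -/
noncomputable def djoH (μ z : ℝ) (t : ℂ) : ℂ :=
  Complex.exp (Complex.I * z * t) * (1 - t ^ 2) ^ (μ : ℂ)

/-- The contour integrand on the vertical side. -/
noncomputable def djoF (μ z : ℝ) (y : ℝ) : ℂ :=
  Complex.exp (Complex.I * z) * ((Real.exp (-(z * y)) * y ^ μ : ℝ) : ℂ) *
    ((y : ℂ) - 2 * Complex.I) ^ (μ : ℂ)

lemma djo_re_aux (x y : ℝ) : (1 - ((x : ℂ) + y * Complex.I) ^ 2).re = 1 - x ^ 2 + y ^ 2 := by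
  simp [sq]; ring

lemma djo_H_contAt (μ z : ℝ) (hμ : 0 < μ) (t : ℂ) (ht : |t.re| ≤ 1) :
    ContinuousAt (djoH μ z) t := by
  have h1 : ContinuousAt (fun w : ℂ => w ^ (μ : ℂ)) (1 - t ^ 2) := by
    refine Complex.continuousAt_cpow_const_of_re_pos (Or.inl ?_) (by simpa using hμ)
    have := djo_re_aux t.re t.im
    rw [Complex.re_add_im] at this
    rw [this]
    have := (sq_le_one_iff_abs_le_one t.re).2 ht
    nlinarith [sq_nonneg t.im]
  have h2 : ContinuousAt (fun t : ℂ => (1 - t ^ 2) ^ (μ : ℂ)) t :=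
    ContinuousAt.comp (f := fun t : ℂ => 1 - t ^ 2) h1 (by fun_prop)
  unfold djoH
  exact ContinuousAt.mul (by fun_prop) h2

lemma djo_H_diffAt (μ z : ℝ) (t : ℂ) (ht : |t.re| < 1) :
    DifferentiableAt ℂ (djoH μ z) t := by
  have h : (1 - t ^ 2) ∈ Complex.slitPlane := by
    left
    have := djo_re_aux t.re t.im
    rw [Complex.re_add_im] at this
    rw [this]
    have := (sq_lt_one_iff_abs_lt_one t.re).2 ht
    nlinarith [sq_nonneg t.im]
  unfold djoH
  refine DifferentiableAt.mul (by fun_prop) ?_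
  exact DifferentiableAt.cpow (by fun_prop) (by fun_prop) h

lemma djo_H_right (μ z : ℝ) (hμ : 0 < μ) (y : ℝ) (hy : 0 ≤ y) :
    djoH μ z (1 + y * Complex.I) = djoF μ z y := by
  unfold djoH djoF
  have e1 : (1 - (1 + (y : ℂ) * Complex.I) ^ 2) = (y : ℂ) * ((y : ℂ) - 2 * Complex.I) := by
    ring_nf; rw [Complex.I_sq]; ring
  have e2 : Complex.exp (Complex.I * z * (1 + y * Complex.I)) =
      Complex.exp (Complex.I * z) * ((Real.exp (-(z * y)) : ℝ) : ℂ) := by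
    rw [Complex.ofReal_exp, ← Complex.exp_add]
    congr 1
    push_cast
    ring_nf; rw [Complex.I_sq]; ring
  rw [e1, e2]
  have e3 : ((y : ℂ) * ((y : ℂ) - 2 * Complex.I)) ^ (μ : ℂ) =
      ((y ^ μ : ℝ) : ℂ) * ((y : ℂ) - 2 * Complex.I) ^ (μ : ℂ) := by
    rcases hy.eq_or_lt with h | h
    · subst h
      rw [Real.zero_rpow hμ.ne']
      simp [hμ.ne']
    · have hne : (y : ℂ) - 2 * Complex.I ≠ 0 := by
        intro h0
        have := congrArg Complex.re h0
        simp at this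
        exact h.ne' this
      have hy0 : (y : ℂ) ≠ 0 := by exact_mod_cast h.ne'
      rw [Complex.ofReal_cpow hy, Complex.cpow_def_of_ne_zero (mul_ne_zero hy0 hne),
        Complex.cpow_def_of_ne_zero hy0, Complex.cpow_def_of_ne_zero hne,
        Complex.log_ofReal_mul h hne, ← Complex.exp_add, Complex.ofReal_log hy]
      congr 1; ring
  rw [e3]; push_cast; ring

lemma djo_H_left (μ z : ℝ) (hμ : 0 < μ) (y : ℝ) (hy : 0 ≤ y) :
    djoH μ z (-1 + y * Complex.I) = (starRingEnd ℂ) (djoF μ z y) := by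
  rw [← djo_H_right μ z hμ y hy]
  unfold djoH
  rw [map_mul, ← Complex.exp_conj]
  have e : (1 - (-1 + (y : ℂ) * Complex.I) ^ 2) =
      (starRingEnd ℂ) (1 - (1 + (y : ℂ) * Complex.I) ^ 2) := by
    simp; ring
  rw [e, Complex.conj_cpow]
  · congr 1
    · congr 1
      simp
      ring
    · simp
  · intro h
    have := (Complex.arg_eq_pi_iff.1 h).1
    have h2 := djo_re_aux 1 y
    push_cast at h2
    rw [h2] at this
    nlinarith [sq_nonneg y]

lemma djo_contour (μ z Y : ℝ) (hμ : 0 < μ) (hY : 0 ≤ Y) :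
    djoJ μ z = (∫ x in (-1 : ℝ)..1, djoH μ z (x + Y * Complex.I)).re +
      2 * (∫ y in (0 : ℝ)..Y, djoF μ z y).im := by
  have h := Complex.integral_boundary_rect_eq_zero_of_continuousOn_of_differentiableOn
    (djoH μ z) (-1) (1 + Y * Complex.I) ?_ ?_
  rotate_left
  · intro t ht
    refine (djo_H_contAt μ z hμ t ?_).continuousWithinAt
    have := ht.1
    simp at this
    exact abs_le.2 this
  · intro t ht
    refine (djo_H_diffAt μ z t ?_).differentiableWithinAt
    have := ht.1
    simp at this
    exact abs_lt.2 this
  have hr : (1 + (Y : ℂ) * Complex.I).re = 1 := by simp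
  have hi : (1 + (Y : ℂ) * Complex.I).im = Y := by simp
  have hr' : (-1 : ℂ).re = -1 := by simp
  have hi' : (-1 : ℂ).im = 0 := by simp
  rw [hr, hi, hr', hi'] at h
  have h1 : ∫ y in (0 : ℝ)..Y, djoH μ z (((1 : ℝ) : ℂ) + y * Complex.I) =
      ∫ y in (0 : ℝ)..Y, djoF μ z y := by
    refine intervalIntegral.integral_congr fun y hy => ?_
    rw [Set.uIcc_of_le hY] at hy
    have := djo_H_right μ z hμ y hy.1
    simpa using this
  have h2 : ∫ y in (0 : ℝ)..Y, djoH μ z (((-1 : ℝ) : ℂ) + y * Complex.I) =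
      (starRingEnd ℂ) (∫ y in (0 : ℝ)..Y, djoF μ z y) := by
    rw [intervalIntegral.integral_of_le hY, intervalIntegral.integral_of_le hY, ← integral_conj]
    refine setIntegral_congr_fun measurableSet_Ioc fun y hy => ?_
    have := djo_H_left μ z hμ y hy.1.le
    simpa using this
  have h3 : (∫ x in (-1 : ℝ)..1, djoH μ z (x + ((0 : ℝ) : ℂ) * Complex.I)).re = djoJ μ z := by
    have hc : Continuous fun x : ℝ => Complex.exp (Complex.I * z * x) * (((1 - x ^ 2) ^ μ : ℝ) : ℂ) := by
      have := djo_weight_cont μ hμ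
      fun_prop
    have : ∫ x in (-1 : ℝ)..1, djoH μ z (x + ((0 : ℝ) : ℂ) * Complex.I) =
        ∫ x in (-1 : ℝ)..1, Complex.exp (Complex.I * z * x) * (((1 - x ^ 2) ^ μ : ℝ) : ℂ) := by
      refine intervalIntegral.integral_congr fun x hx => ?_
      rw [Set.uIcc_of_le (by norm_num)] at hx
      have hx2 : 0 ≤ 1 - x ^ 2 := by nlinarith [hx.1, hx.2]
      simp only [djoH]
      rw [Complex.ofReal_cpow hx2]
      simp
    rw [this]
    have h4 := Complex.reCLM.intervalIntegral_comp_comm (hc.intervalIntegrable (μ := volume) (-1) 1)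
    rw [Complex.reCLM_apply] at h4
    rw [← h4]
    unfold djoJ
    refine intervalIntegral.integral_congr fun x hx => ?_
    simp only [Complex.reCLM_apply, Complex.re_mul_ofReal]
    congr 1
    rw [Complex.exp_re]
    simp
  rw [h1, h2] at h
  have h5 := congrArg Complex.re h
  simp only [Complex.sub_re, Complex.add_re, h3, smul_eq_mul, Complex.mul_re, Complex.I_re,
    Complex.I_im, Complex.conj_im, Complex.zero_re] at h5
  linarith

lemma djo_top (μ z : ℝ) (hμ : 0 < μ) (hz : 0 < z) :
    Filter.Tendsto (fun Y : ℝ => (∫ x in (-1 : ℝ)..1, djoH μ z (x + Y * Complex.I)).re)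
      Filter.atTop (nhds 0) := by
  have hb : ∀ Y : ℝ, 1 ≤ Y →
      ‖(∫ x in (-1 : ℝ)..1, djoH μ z (x + Y * Complex.I)).re‖ ≤
        2 * 3 ^ μ * ((Y ^ 2) ^ μ * Real.exp (-z * Y)) := by
    intro Y hY
    refine (Complex.abs_re_le_norm _).trans ?_
    refine (intervalIntegral.norm_integral_le_of_norm_le_const
      (C := 3 ^ μ * ((Y ^ 2) ^ μ * Real.exp (-z * Y))) ?_).trans (le_of_eq ?_)
    · intro x hx
      rw [Set.uIoc_of_le (by norm_num)] at hx
      have hx2 : x ^ 2 ≤ 1 := by nlinarith [hx.1, hx.2]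
      have hxa : |x| ≤ 1 := abs_le.2 ⟨hx.1.le, hx.2⟩
      unfold djoH
      rw [norm_mul, Complex.norm_cpow_real, Complex.norm_exp]
      have e1 : (Complex.I * z * (x + Y * Complex.I)).re = -z * Y := by simp
      rw [e1]
      have e2 : ‖1 - ((x : ℂ) + Y * Complex.I) ^ 2‖ ≤ 3 * Y ^ 2 := by
        have e3 : ‖(x : ℂ) + Y * Complex.I‖ ^ 2 = x ^ 2 + Y ^ 2 := by
          rw [← Complex.normSq_eq_norm_sq, Complex.normSq_add_mul_I]
        calc ‖1 - ((x : ℂ) + Y * Complex.I) ^ 2‖ ≤ ‖(1 : ℂ)‖ + ‖((x : ℂ) + Y * Complex.I) ^ 2‖ :=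
              norm_sub_le _ _
          _ = 1 + (x ^ 2 + Y ^ 2) := by rw [norm_pow, e3, norm_one]
          _ ≤ 3 * Y ^ 2 := by nlinarith
      calc _ ≤ Real.exp (-z * Y) * (3 * Y ^ 2) ^ μ := by gcongr
        _ = _ := by rw [Real.mul_rpow (by norm_num) (by positivity)]; ring
    · rw [show |(1 : ℝ) - -1| = 2 by norm_num]; ring
  have hlim : Filter.Tendsto (fun Y : ℝ => 2 * 3 ^ μ * ((Y ^ 2) ^ μ * Real.exp (-z * Y)))
      Filter.atTop (nhds 0) := by
    have h1 := tendsto_rpow_mul_exp_neg_mul_atTop_nhds_zero (2 * μ) z hz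
    have h2 := h1.const_mul (2 * 3 ^ μ)
    rw [mul_zero] at h2
    refine h2.congr' ?_
    filter_upwards [Filter.eventually_ge_atTop 0] with Y hY
    rw [Real.rpow_mul hY]
    norm_num
  refine squeeze_zero_norm' ?_ hlim
  filter_upwards [Filter.eventually_ge_atTop 1] with Y hY using hb Y hY

lemma djo_slit (y : ℝ) : ((y : ℂ) - 2 * Complex.I) ∈ Complex.slitPlane := by
  right; simp

lemma djo_cpow_diff (μ : ℝ) (hμ : 0 < μ) (y : ℝ) (hy : 0 ≤ y) :
    ‖((y : ℂ) - 2 * Complex.I) ^ (μ : ℂ) - (-(2 * Complex.I)) ^ (μ : ℂ)‖ ≤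
      μ * (y + 2) ^ μ * y := by
  have hd : ∀ x : ℝ, HasDerivAt (fun y : ℝ => ((y : ℂ) - 2 * Complex.I) ^ (μ : ℂ))
      ((μ : ℂ) * ((x : ℂ) - 2 * Complex.I) ^ ((μ : ℂ) - 1)) x := by
    intro x
    have h : HasDerivAt (fun w : ℂ => (w - 2 * Complex.I) ^ (μ : ℂ))
      ((μ : ℂ) * ((x : ℂ) - 2 * Complex.I) ^ ((μ : ℂ) - 1) * 1) (x : ℂ) :=
      ((hasDerivAt_id (x : ℂ)).sub_const (2 * Complex.I)).cpow_const (djo_slit x)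
    rw [mul_one] at h
    exact h.comp_ofReal
  have h := norm_image_sub_le_of_norm_deriv_le_segment' (a := 0) (b := y)
    (f := fun y : ℝ => ((y : ℂ) - 2 * Complex.I) ^ (μ : ℂ))
    (f' := fun x : ℝ => (μ : ℂ) * ((x : ℂ) - 2 * Complex.I) ^ ((μ : ℂ) - 1))
    (C := μ * (y + 2) ^ μ) (fun x _ => (hd x).hasDerivWithinAt) ?_ y ⟨hy, le_refl y⟩
  · simpa using h
  · intro x hx
    have e : ((μ : ℂ) - 1) = ((μ - 1 : ℝ) : ℂ) := by push_cast; ring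
    rw [norm_mul, e, Complex.norm_cpow_real, Complex.norm_real, Real.norm_of_nonneg hμ.le]
    have h1 : 1 ≤ ‖(x : ℂ) - 2 * Complex.I‖ := by
      have := Complex.abs_im_le_norm ((x : ℂ) - 2 * Complex.I)
      simp at this
      linarith
    have h2 : ‖(x : ℂ) - 2 * Complex.I‖ ≤ y + 2 := by
      refine (norm_sub_le _ _).trans ?_
      simp only [Complex.norm_real, norm_mul, Complex.norm_I, Complex.norm_ofNat,
        Real.norm_of_nonneg hx.1]
      linarith [hx.2]
    have h3 : ‖(x : ℂ) - 2 * Complex.I‖ ^ (μ - 1) ≤ (y + 2) ^ μ :=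
      (Real.rpow_le_rpow_of_exponent_le h1 (by linarith)).trans
        (Real.rpow_le_rpow (by linarith) h2 hμ.le)
    gcongr

lemma djo_pow_le_exp (μ : ℝ) (hμ : 0 < μ) :
    ∃ K : ℝ, 0 < K ∧ ∀ y : ℝ, 0 ≤ y → (y + 2) ^ μ ≤ K * Real.exp (y / 2) := by
  refine ⟨Real.exp (1 - μ + μ * Real.log (2 * μ)), Real.exp_pos _, fun y hy => ?_⟩
  rw [← Real.exp_add, Real.rpow_def_of_pos (by linarith)]
  apply Real.exp_le_exp.2
  have h := Real.log_le_sub_one_of_pos (x := (y + 2) / (2 * μ)) (by positivity)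
  rw [Real.log_div (by positivity) (by positivity)] at h
  have h2 := mul_le_mul_of_nonneg_left h hμ.le
  have h3 : μ * ((y + 2) / (2 * μ) - 1) = (y + 2) / 2 - μ := by field_simp
  rw [h3] at h2
  nlinarith

lemma djo_phase (μ z : ℝ) :
    (Complex.exp (Complex.I * z) * (-(2 * Complex.I)) ^ (μ : ℂ)).im =
      2 ^ μ * Real.sin (z - μ * π / 2) := by
  have e : (-(2 * Complex.I)) ^ (μ : ℂ) =
      ((2 ^ μ : ℝ) : ℂ) * Complex.exp (((-(μ * π / 2) : ℝ) : ℂ) * Complex.I) := by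
    have h2 : (-(2 * Complex.I)) = ((2 : ℝ) : ℂ) * (-Complex.I) := by push_cast; ring
    have hI : (-Complex.I) ≠ 0 := neg_ne_zero.2 Complex.I_ne_zero
    rw [h2, Complex.cpow_def_of_ne_zero (mul_ne_zero (by norm_num) hI),
      Complex.log_ofReal_mul (by norm_num) hI, Complex.log_neg_I,
      Real.rpow_def_of_pos (by norm_num), Complex.ofReal_exp, ← Complex.exp_add]
    congr 1
    push_cast; ring
  rw [e]
  have e2 : Complex.exp (Complex.I * z) * (((2 ^ μ : ℝ) : ℂ) *
      Complex.exp (((-(μ * π / 2) : ℝ) : ℂ) * Complex.I)) =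
      ((2 ^ μ : ℝ) : ℂ) * Complex.exp (((z - μ * π / 2 : ℝ) : ℂ) * Complex.I) := by
    rw [mul_left_comm, ← Complex.exp_add]
    congr 2
    push_cast; ring
  rw [e2, Complex.im_ofReal_mul, Complex.exp_ofReal_mul_I_im]

lemma djo_gamma_int (s r : ℝ) (hs : 0 < s) (hr : 0 < r) :
    IntegrableOn (fun y : ℝ => Real.exp (-(r * y)) * y ^ s) (Set.Ioi 0) ∧
    ∫ y in Set.Ioi (0 : ℝ), Real.exp (-(r * y)) * y ^ s = (1 / r) ^ (s + 1) * Real.Gamma (s + 1) := by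
  have h := Real.integral_rpow_mul_exp_neg_mul_Ioi (a := s + 1) (r := r) (by linarith) hr
  rw [add_sub_cancel_right] at h
  have hpos : 0 < (1 / r) ^ (s + 1) * Real.Gamma (s + 1) := by
    have := Real.Gamma_pos_of_pos (show 0 < s + 1 by linarith)
    positivity
  have h' : ∫ y in Set.Ioi (0 : ℝ), Real.exp (-(r * y)) * y ^ s =
      (1 / r) ^ (s + 1) * Real.Gamma (s + 1) := by
    rw [← h]
    congr 1
    ext y; ring
  exact ⟨.of_integral_ne_zero (by rw [h']; exact hpos.ne'), h'⟩

lemma djo_F_cont (μ z : ℝ) (hμ : 0 < μ) : Continuous (djoF μ z) := by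
  have h1 : Continuous fun y : ℝ => y ^ μ :=
    continuous_id.rpow_const fun _ => Or.inr hμ.le
  have h2 : Continuous fun y : ℝ => ((y : ℂ) - 2 * Complex.I) ^ (μ : ℂ) :=
    Continuous.cpow (by fun_prop) (by fun_prop) djo_slit
  unfold djoF
  fun_prop

lemma djo_J_asymp (μ : ℝ) (hμ : 0 < μ) :
    ∃ C : ℝ, 0 < C ∧ ∀ z : ℝ, 1 ≤ z →
      |z ^ (μ + 1) * djoJ μ z - 2 ^ (μ + 1) * Real.Gamma (μ + 1) * Real.sin (z - μ * π / 2)| ≤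
        C / z := by
  obtain ⟨K, hK, hKb⟩ := djo_pow_le_exp μ hμ
  have hG2 := Real.Gamma_pos_of_pos (show 0 < μ + 1 + 1 by linarith)
  refine ⟨2 * (μ * K * (2 ^ (μ + 1 + 1) * Real.Gamma (μ + 1 + 1))), by positivity, ?_⟩
  intro z hz
  have hz0 : 0 < z := by linarith
  -- the main part
  set M : ℝ → ℂ := fun y => Complex.exp (Complex.I * z) *
    ((Real.exp (-(z * y)) * y ^ μ : ℝ) : ℂ) * (-(2 * Complex.I)) ^ (μ : ℂ) with hM
  obtain ⟨hi1, hv1⟩ := djo_gamma_int μ z hμ hz0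
  have hMi : IntegrableOn M (Set.Ioi 0) := by
    refine Integrable.mul_const (Integrable.const_mul ?_ _) _
    exact Integrable.ofReal hi1
  have hMv : ∫ y in Set.Ioi (0 : ℝ), M y = Complex.exp (Complex.I * z) *
      (((1 / z) ^ (μ + 1) * Real.Gamma (μ + 1) : ℝ) : ℂ) * (-(2 * Complex.I)) ^ (μ : ℂ) := by
    rw [hM, integral_mul_const, integral_const_mul, integral_complex_ofReal, hv1]
  -- the error part
  obtain ⟨hi2, hv2⟩ := djo_gamma_int (μ + 1) (z - 1 / 2) (by linarith) (by linarith)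
  have hbd : ∀ y ∈ Set.Ioi (0 : ℝ), ‖djoF μ z y - M y‖ ≤
      μ * K * (Real.exp (-((z - 1 / 2) * y)) * y ^ (μ + 1)) := by
    intro y hy
    have hy0 : (0 : ℝ) < y := hy
    have e : djoF μ z y - M y = Complex.exp (Complex.I * z) *
      ((Real.exp (-(z * y)) * y ^ μ : ℝ) : ℂ) *
        (((y : ℂ) - 2 * Complex.I) ^ (μ : ℂ) - (-(2 * Complex.I)) ^ (μ : ℂ)) := by
      simp only [djoF, hM]; ring
    rw [e, norm_mul, norm_mul, Complex.norm_real, Real.norm_of_nonneg (by positivity),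
      Complex.norm_exp]
    have e1 : (Complex.I * (z : ℂ)).re = 0 := by simp
    rw [e1, Real.exp_zero, one_mul]
    have h1 := djo_cpow_diff μ hμ y hy0.le
    have h2 : μ * (y + 2) ^ μ * y ≤ μ * (K * Real.exp (y / 2)) * y := by
      have := hKb y hy0.le
      gcongr
    calc _ ≤ Real.exp (-(z * y)) * y ^ μ * (μ * (K * Real.exp (y / 2)) * y) := by
            apply mul_le_mul_of_nonneg_left (h1.trans h2) (by positivity)
      _ = μ * K * ((Real.exp (-(z * y)) * Real.exp (y / 2)) * (y ^ μ * y)) := by ring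
      _ = _ := by
        rw [← Real.exp_add, Real.rpow_add_one hy0.ne']
        congr 3
        congr 1
        ring
  have hEi : IntegrableOn (fun y => djoF μ z y - M y) (Set.Ioi 0) := by
    refine Integrable.mono' (hi2.const_mul (μ * K)) ?_ ?_
    · exact (djo_F_cont μ z hμ).aestronglyMeasurable.sub hMi.aestronglyMeasurable
    · exact (ae_restrict_iff' measurableSet_Ioi).2 (Filter.Eventually.of_forall hbd)
  have hEv : ‖∫ y in Set.Ioi (0 : ℝ), (djoF μ z y - M y)‖ ≤
      μ * K * ((1 / (z - 1 / 2)) ^ (μ + 1 + 1) * Real.Gamma (μ + 1 + 1)) := by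
    rw [← hv2, ← integral_const_mul]
    exact norm_integral_le_of_norm_le (hi2.const_mul (μ * K))
      ((ae_restrict_iff' measurableSet_Ioi).2 (Filter.Eventually.of_forall hbd))
  have hFi : IntegrableOn (djoF μ z) (Set.Ioi 0) := by
    have := hEi.add hMi
    refine this.congr (Filter.Eventually.of_forall fun y => ?_)
    simp
  -- the value
  have hJ : djoJ μ z = 2 * (∫ y in Set.Ioi (0 : ℝ), djoF μ z y).im := by
    have h1 := intervalIntegral_tendsto_integral_Ioi (0 : ℝ) hFi Filter.tendsto_id
    have h2 := ((Complex.continuous_im.tendsto _).comp h1).const_mul 2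
    have h3 := (djo_top μ z hμ hz0).add h2
    rw [zero_add] at h3
    refine tendsto_nhds_unique ?_ h3
    refine Filter.Tendsto.congr' ?_ tendsto_const_nhds
    filter_upwards [Filter.eventually_ge_atTop 0] with Y hY
    simpa using djo_contour μ z Y hμ hY
  have hsplit : ∫ y in Set.Ioi (0 : ℝ), djoF μ z y =
      (∫ y in Set.Ioi (0 : ℝ), (djoF μ z y - M y)) + ∫ y in Set.Ioi (0 : ℝ), M y := by
    rw [integral_sub hFi hMi]; ring
  have hMim : (∫ y in Set.Ioi (0 : ℝ), M y).im =
      (1 / z) ^ (μ + 1) * Real.Gamma (μ + 1) * (2 ^ μ * Real.sin (z - μ * π / 2)) := by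
    rw [hMv, mul_right_comm, mul_comm, Complex.im_ofReal_mul, djo_phase]
  have hpz : z ^ (μ + 1) * (1 / z) ^ (μ + 1) = 1 := by
    rw [← Real.mul_rpow hz0.le (by positivity), mul_one_div_cancel hz0.ne', Real.one_rpow]
  have h2p : (2 : ℝ) ^ (μ + 1) = 2 ^ μ * 2 := Real.rpow_add_one (by norm_num) μ
  set E := ∫ y in Set.Ioi (0 : ℝ), (djoF μ z y - M y) with hE
  have hfin : z ^ (μ + 1) * djoJ μ z -
      2 ^ (μ + 1) * Real.Gamma (μ + 1) * Real.sin (z - μ * π / 2) = z ^ (μ + 1) * (2 * E.im) := by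
    rw [hJ, hsplit, Complex.add_im, hMim, h2p]
    linear_combination (2 * Real.Gamma (μ + 1) * (2 ^ μ * Real.sin (z - μ * π / 2))) * hpz
  rw [hfin, abs_mul, abs_mul, abs_of_pos (by positivity : 0 < z ^ (μ + 1)), abs_two]
  have hEim := (Complex.abs_im_le_norm E).trans hEv
  have hr : (1 / (z - 1 / 2)) ^ (μ + 1 + 1) ≤ (2 * (1 / z)) ^ (μ + 1 + 1) := by
    apply Real.rpow_le_rpow
    · apply div_nonneg zero_le_one; linarith
    · rw [mul_one_div, div_le_div_iff₀ (by linarith) hz0]; linarith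
    · linarith
  rw [Real.mul_rpow (by norm_num) (by positivity), Real.rpow_add_one (x := 1 / z) (by positivity)] at hr
  calc z ^ (μ + 1) * (2 * |E.im|) ≤ z ^ (μ + 1) * (2 * (μ * K *
        ((2 ^ (μ + 1 + 1) * ((1 / z) ^ (μ + 1) * (1 / z))) * Real.Gamma (μ + 1 + 1)))) := by
        refine mul_le_mul_of_nonneg_left ?_ (by positivity)
        refine mul_le_mul_of_nonneg_left (hEim.trans ?_) (by norm_num)
        refine mul_le_mul_of_nonneg_left ?_ (by positivity)
        exact mul_le_mul_of_nonneg_right hr hG2.le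
    _ = (z ^ (μ + 1) * (1 / z) ^ (μ + 1)) *
        (2 * (μ * K * (2 ^ (μ + 1 + 1) * Real.Gamma (μ + 1 + 1)))) * (1 / z) := by ring
    _ = _ := by rw [hpz]; ring

/-! ### Part 5: value of the model function at zero -/

lemma djo_J_zero (μ : ℝ) (hμ : 0 < μ) :
    djoJ μ 0 * Real.Gamma (μ + 3 / 2) = √π * Real.Gamma (μ + 1) := by
  have hre : 0 < ((μ : ℂ) + 1).re := by simp; linarith
  have h1 := Complex.betaIntegral_scaled ((μ : ℂ) + 1) ((μ : ℂ) + 1) (a := 2) (by norm_num)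
  have h2 : ∫ x in (0 : ℝ)..2, (x : ℂ) ^ ((μ : ℂ) + 1 - 1) * (((2 : ℝ) : ℂ) - x) ^ ((μ : ℂ) + 1 - 1) =
      ((djoJ μ 0 : ℝ) : ℂ) := by
    unfold djoJ
    rw [← intervalIntegral.integral_ofReal]
    have h3 := intervalIntegral.integral_comp_add_right (a := -1) (b := 1)
      (fun x : ℝ => (x : ℂ) ^ ((μ : ℂ) + 1 - 1) * (((2 : ℝ) : ℂ) - x) ^ ((μ : ℂ) + 1 - 1)) 1
    norm_num at h3
    rw [add_sub_cancel_right]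
    norm_num
    rw [← h3]
    refine intervalIntegral.integral_congr fun x hx => ?_
    rw [Set.uIcc_of_le (by norm_num)] at hx
    have ha : 0 ≤ x + 1 := by linarith [hx.1]
    have hb : 0 ≤ 1 - x := by linarith [hx.2]
    have e1 : ((x : ℂ) + 1) ^ (μ : ℂ) = (((x + 1) ^ μ : ℝ) : ℂ) := by
      rw [Complex.ofReal_cpow ha]; push_cast; rfl
    have e2 : ((2 : ℂ) - ((x : ℂ) + 1)) ^ (μ : ℂ) = (((1 - x) ^ μ : ℝ) : ℂ) := by
      rw [Complex.ofReal_cpow hb]; congr 1; push_cast; ring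
    show ((x : ℂ) + 1) ^ (μ : ℂ) * ((2 : ℂ) - ((x : ℂ) + 1)) ^ (μ : ℂ) = _
    rw [e1, e2, ← Complex.ofReal_mul, ← Real.mul_rpow ha hb]
    congr 2
    ring
  rw [h2] at h1
  have h4 := Complex.betaIntegral_eq_Gamma_mul_div ((μ : ℂ) + 1) ((μ : ℂ) + 1) hre hre
  have h5 : djoJ μ 0 = 2 ^ (2 * μ + 1) *
      (Real.Gamma (μ + 1) * Real.Gamma (μ + 1) / Real.Gamma (2 * (μ + 1))) := by
    have e : (μ : ℂ) + 1 = ((μ + 1 : ℝ) : ℂ) := by push_cast; rfl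
    apply Complex.ofReal_injective
    rw [h1, h4, e, ← Complex.ofReal_add, Complex.Gamma_ofReal, Complex.Gamma_ofReal]
    push_cast
    congr 1
    · rw [Complex.ofReal_cpow (by norm_num)]
      congr 1
      push_cast; ring
    · congr 3; ring
  have h6 := Real.Gamma_mul_Gamma_add_half (μ + 1)
  have hG : 0 < Real.Gamma (2 * (μ + 1)) := Real.Gamma_pos_of_pos (by linarith)
  have e3 : μ + 1 + 1 / 2 = μ + 3 / 2 := by ring
  rw [e3] at h6
  have h7 : (2 : ℝ) ^ (2 * μ + 1) * 2 ^ (1 - 2 * (μ + 1)) = 1 := by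
    rw [← Real.rpow_add (by norm_num)]
    ring_nf
    simp
  rw [h5]
  have h8 : (2 : ℝ) ^ (2 * μ + 1) *
      (Real.Gamma (μ + 1) * Real.Gamma (μ + 1) / Real.Gamma (2 * (μ + 1))) * Real.Gamma (μ + 3 / 2)
      = 2 ^ (2 * μ + 1) * (Real.Gamma (μ + 1) / Real.Gamma (2 * (μ + 1))) *
        (Real.Gamma (μ + 1) * Real.Gamma (μ + 3 / 2)) := by ring
  rw [h8, h6]
  field_simp
  linear_combination h7

/-! ### Part 6: ratios of Gamma functions -/

/-- `f L = 1 + O(1/L)`. -/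
def djoNear (f : ℕ → ℝ) : Prop := ∃ C : ℝ, 0 ≤ C ∧ ∀ L : ℕ, 1 ≤ L → |f L - 1| ≤ C / L

lemma djoNear.mul {f g : ℕ → ℝ} (hf : djoNear f) (hg : djoNear g) :
    djoNear fun L => f L * g L := by
  obtain ⟨A, hA, hf⟩ := hf
  obtain ⟨B, hB, hg⟩ := hg
  refine ⟨A * (1 + B) + B, by positivity, fun L hL => ?_⟩
  have hL' : (1 : ℝ) ≤ L := by exact_mod_cast hL
  have h1 := hf L hL
  have h2 := hg L hL
  have h3 : |g L| ≤ 1 + B := by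
    have : |g L| ≤ |g L - 1| + 1 := by
      have := abs_add_le (g L - 1) 1
      rwa [sub_add_cancel, abs_one] at this
    have h4 : B / L ≤ B := div_le_self hB hL'
    linarith
  have e : f L * g L - 1 = (f L - 1) * g L + (g L - 1) := by ring
  rw [e]
  calc |(f L - 1) * g L + (g L - 1)| ≤ |f L - 1| * |g L| + |g L - 1| := by
        rw [← abs_mul]; exact abs_add_le _ _
    _ ≤ A / L * (1 + B) + B / L := by gcongr
    _ = _ := by ring

lemma djoNear.congr {f g : ℕ → ℝ} (hf : djoNear f) (h : ∀ L : ℕ, 1 ≤ L → f L = g L) :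
    djoNear g := by
  obtain ⟨A, hA, hf⟩ := hf
  exact ⟨A, hA, fun L hL => by rw [← h L hL]; exact hf L hL⟩

lemma djo_near_add (h : ℝ) (hh : 0 ≤ h) : djoNear fun L => ((L : ℝ) + h) / L := by
  refine ⟨h, hh, fun L hL => ?_⟩
  have hL' : (0 : ℝ) < L := by exact_mod_cast hL
  have e : ((L : ℝ) + h) / L - 1 = h / L := by field_simp; ring
  rw [e, abs_of_nonneg (by positivity)]

lemma djo_near_ratio (h : ℝ) (hh : 0 ≤ h) : djoNear fun L => (L : ℝ) / (L + h) := by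
  refine ⟨h, hh, fun L hL => ?_⟩
  have hL' : (0 : ℝ) < L := by exact_mod_cast hL
  have e : (L : ℝ) / (L + h) - 1 = -(h / (L + h)) := by field_simp; ring
  rw [e, abs_neg, abs_of_nonneg (by positivity)]
  gcongr
  linarith

lemma djo_near_rpow (h : ℝ) (hh : 0 ≤ h) (δ : ℝ) (hδ : 0 ≤ δ) (hδ1 : δ ≤ 1) (n : ℕ) :
    djoNear fun L => ((L : ℝ) / (L + h)) ^ (δ + n) := by
  induction n with
  | zero =>
    obtain ⟨C, hC, hb⟩ := djo_near_ratio h hh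
    refine ⟨C, hC, fun L hL => ?_⟩
    have hL' : (0 : ℝ) < L := by exact_mod_cast hL
    have h1 := hb L hL
    have h0 : 0 < (L : ℝ) / (L + h) := by positivity
    have hle : (L : ℝ) / (L + h) ≤ 1 := by rw [div_le_one (by positivity)]; linarith
    have h2 : (L : ℝ) / (L + h) ≤ ((L : ℝ) / (L + h)) ^ δ := by
      have := Real.rpow_le_rpow_of_exponent_ge h0 hle hδ1
      rwa [Real.rpow_one] at this
    have h3 := Real.rpow_le_one h0.le hle hδ
    simp only [Nat.cast_zero, add_zero]
    rw [abs_le] at h1 ⊢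
    constructor <;> linarith [h1.1, h1.2, div_nonneg hC hL'.le]
  | succ n ih =>
    refine (ih.mul (djo_near_ratio h hh)).congr fun L hL => ?_
    have hL' : (0 : ℝ) < L := by exact_mod_cast hL
    have h0 : 0 < (L : ℝ) / (L + h) := by positivity
    rw [← Real.rpow_add_one h0.ne']
    congr 1
    push_cast; ring

lemma djo_wendel_up (x δ : ℝ) (hx : 0 < x) (hδ : 0 ≤ δ) (hδ1 : δ ≤ 1) :
    Real.Gamma (x + δ) ≤ Real.Gamma x * x ^ δ := by
  rcases hδ.eq_or_lt with h | h
  · subst h; simp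
  rcases hδ1.eq_or_lt with h1 | h1
  · subst h1; rw [Real.Gamma_add_one hx.ne', Real.rpow_one, mul_comm]
  have hG := Real.Gamma_pos_of_pos hx
  have := Real.Gamma_mul_add_mul_le_rpow_Gamma_mul_rpow_Gamma hx (show 0 < x + 1 by linarith)
    (show 0 < 1 - δ by linarith) h (by ring)
  have e : (1 - δ) * x + δ * (x + 1) = x + δ := by ring
  rw [e, Real.Gamma_add_one hx.ne', Real.mul_rpow hx.le hG.le] at this
  calc _ ≤ _ := this
    _ = (Real.Gamma x ^ (1 - δ) * Real.Gamma x ^ δ) * x ^ δ := by ring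
    _ = _ := by rw [← Real.rpow_add hG, sub_add_cancel, Real.rpow_one]

lemma djo_near_gamma (r : ℝ) (hr : 0 < r) (δ : ℝ) (hδ : 0 ≤ δ) (hδ1 : δ ≤ 1) (n : ℕ) :
    djoNear fun L => Real.Gamma (L + r + (δ + n)) / (Real.Gamma (L + r) * (L : ℝ) ^ (δ + n)) := by
  induction n with
  | zero =>
    refine ⟨r + δ, by positivity, fun L hL => ?_⟩
    have hL' : (0 : ℝ) < L := by exact_mod_cast hL
    simp only [Nat.cast_zero, add_zero]
    set x : ℝ := L + r with hx
    have hx0 : 0 < x := by positivity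
    have hG := Real.Gamma_pos_of_pos hx0
    have hG2 := Real.Gamma_pos_of_pos (show 0 < x + δ by linarith)
    have hLd : 0 < (L : ℝ) ^ δ := by positivity
    have h1 := djo_wendel_up x δ hx0 hδ hδ1
    have h2 := djo_wendel_up (x + δ) (1 - δ) (by linarith) (by linarith) (by linarith)
    rw [show x + δ + (1 - δ) = x + 1 by ring, Real.Gamma_add_one hx0.ne'] at h2
    have hup : Real.Gamma (x + δ) / (Real.Gamma x * (L : ℝ) ^ δ) ≤ 1 + r / L := by
      calc _ ≤ (Real.Gamma x * x ^ δ) / (Real.Gamma x * (L : ℝ) ^ δ) := by gcongr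
        _ = (x / L) ^ δ := by
          rw [Real.div_rpow hx0.le hL'.le]; field_simp
        _ ≤ (x / L) ^ (1 : ℝ) := by
          apply Real.rpow_le_rpow_of_exponent_le _ hδ1
          rw [le_div_iff₀ hL']; linarith
        _ = 1 + r / L := by rw [Real.rpow_one, hx]; field_simp
    have hlow : 1 - δ / L ≤ Real.Gamma (x + δ) / (Real.Gamma x * (L : ℝ) ^ δ) := by
      rw [le_div_iff₀ (by positivity)]
      have hp : 0 < (x + δ) ^ (1 - δ) := Real.rpow_pos_of_pos (by linarith) _
      have h3 : Real.Gamma x * (x / (x + δ) ^ (1 - δ)) ≤ Real.Gamma (x + δ) := by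
        rw [mul_div_assoc', div_le_iff₀ hp]; linarith
      refine le_trans ?_ h3
      rw [mul_left_comm]
      refine mul_le_mul_of_nonneg_left ?_ hG.le
      rw [le_div_iff₀ hp]
      have h4 : (L : ℝ) ^ δ ≤ (x + δ) ^ δ := Real.rpow_le_rpow hL'.le (by linarith) hδ
      have h5 : (L : ℝ) ^ δ * (x + δ) ^ (1 - δ) ≤ x + δ := by
        calc _ ≤ (x + δ) ^ δ * (x + δ) ^ (1 - δ) := by gcongr
          _ = x + δ := by
            rw [← Real.rpow_add (by linarith)]; simp
      rcases le_total 0 (1 - δ / L) with h6 | h6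
      · calc _ = (1 - δ / L) * ((L : ℝ) ^ δ * (x + δ) ^ (1 - δ)) := by ring
          _ ≤ (1 - δ / L) * (x + δ) := by gcongr
          _ ≤ x := by
            have : δ ≤ δ / L * (x + δ) := by
              rw [div_mul_eq_mul_div, le_div_iff₀ hL']
              gcongr
              linarith
            linarith
      · calc _ = (1 - δ / L) * ((L : ℝ) ^ δ * (x + δ) ^ (1 - δ)) := by ring
          _ ≤ 0 := mul_nonpos_of_nonpos_of_nonneg h6 (by positivity)
          _ ≤ x := hx0.le
    have e : (r + δ) / (L : ℝ) = r / L + δ / L := by ring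
    rw [abs_le, e]
    have : 0 ≤ r / L := by positivity
    have : 0 ≤ δ / L := by positivity
    constructor <;> linarith
  | succ n ih =>
    refine (ih.mul (djo_near_add (r + (δ + n)) (by positivity))).congr fun L hL => ?_
    have hL' : (0 : ℝ) < L := by exact_mod_cast hL
    have hG := Real.Gamma_pos_of_pos (show 0 < (L : ℝ) + r by positivity)
    have e1 : (L : ℝ) + r + (δ + (n + 1 : ℕ)) = (L + r + (δ + n)) + 1 := by push_cast; ring
    have e2 : δ + ((n + 1 : ℕ) : ℝ) = (δ + n) + 1 := by push_cast; ring
    have hp : 0 < (L : ℝ) + r + (δ + n) := by positivity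
    rw [e1, e2, Real.Gamma_add_one hp.ne', Real.rpow_add_one hL'.ne']
    have : 0 < (L : ℝ) ^ (δ + (n : ℝ)) := by positivity
    field_simp
    ring

lemma djo_near_main (r h δ : ℝ) (hr : 0 < r) (hh : 0 ≤ h) (hδ : 0 ≤ δ) :
    djoNear fun L => Real.Gamma (L + r + δ) / (Real.Gamma (L + r) * ((L : ℝ) + h) ^ δ) := by
  have h1 := djo_near_gamma r hr (Int.fract δ) (Int.fract_nonneg δ) (Int.fract_lt_one δ).le ⌊δ⌋₊
  have h2 := djo_near_rpow h hh (Int.fract δ) (Int.fract_nonneg δ) (Int.fract_lt_one δ).le ⌊δ⌋₊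
  have e : Int.fract δ + (⌊δ⌋₊ : ℝ) = δ := by
    rw [natCast_floor_eq_intCast_floor hδ, Int.fract_add_floor]
  rw [e] at h1 h2
  refine (h1.mul h2).congr fun L hL => ?_
  have hL' : (0 : ℝ) < L := by exact_mod_cast hL
  have hG := Real.Gamma_pos_of_pos (show 0 < (L : ℝ) + r by positivity)
  rw [Real.div_rpow hL'.le (by positivity)]
  have : 0 < (L : ℝ) ^ δ := by positivity
  have : 0 < ((L : ℝ) + h) ^ δ := by positivity
  field_simp

/-! ### Part 7: comparison of Jacobi polynomials with the model function -/

lemma djo_sin_bounds (x : ℝ) (hx : 0 < x) (hx1 : x ≤ 1) :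
    x - x ^ 3 / 4 ≤ Real.sin x ∧ Real.sin x ≤ x ∧ 3 / 4 * x ≤ Real.sin x := by
  have h1 := Real.sin_gt_sub_cube hx
  have h0 : 0 < x ^ 3 := by positivity
  have h2 := Real.sin_lt hx
  refine ⟨by linarith, h2.le, ?_⟩
  have : x ^ 3 ≤ x := by
    calc x ^ 3 = x * (x * x) := by ring
      _ ≤ x * (1 * 1) := by gcongr
      _ = x := by ring
  linarith

lemma djo_bound_sq (x : ℝ) (hx : 0 < x) (hx1 : x ≤ 1) :
    |1 / x ^ 2 - 1 / Real.sin x ^ 2| ≤ 1 := by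
  obtain ⟨h1, h2, h3⟩ := djo_sin_bounds x hx hx1
  have hs : 0 < Real.sin x := by linarith [mul_pos (show (0 : ℝ) < 3 / 4 by norm_num) hx]
  have hle : Real.sin x ^ 2 ≤ x ^ 2 := by gcongr
  have e : 1 / x ^ 2 - 1 / Real.sin x ^ 2 =
      -((x ^ 2 - Real.sin x ^ 2) / (x ^ 2 * Real.sin x ^ 2)) := by
    field_simp; ring
  rw [e, abs_neg, abs_of_nonneg (div_nonneg (by linarith) (by positivity)),
    div_le_one (by positivity)]
  have h4 : (x + Real.sin x) * (x - Real.sin x) ≤ (2 * x) * (x ^ 3 / 4) := by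
    apply mul_le_mul <;> linarith
  have h5 : (3 / 4 * x) ^ 2 ≤ Real.sin x ^ 2 := by gcongr
  have h6 : x ^ 2 * (3 / 4 * x) ^ 2 ≤ x ^ 2 * Real.sin x ^ 2 := by gcongr
  have h7 : 0 < x ^ 4 := by positivity
  nlinarith

lemma djo_bound_cot (x : ℝ) (hx : 0 < x) (hx1 : x ≤ 1) :
    |Real.cos x / Real.sin x - 1 / x| ≤ x := by
  obtain ⟨h1, h2, h3⟩ := djo_sin_bounds x hx hx1
  have hs : 0 < Real.sin x := by linarith [mul_pos (show (0 : ℝ) < 3 / 4 by norm_num) hx]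
  have hc := Real.one_sub_sq_div_two_le_cos (x := x)
  have hc1 := Real.cos_le_one x
  have e : Real.cos x / Real.sin x - 1 / x = (x * Real.cos x - Real.sin x) / (x * Real.sin x) := by
    field_simp
  rw [e, abs_div, abs_of_pos (show 0 < x * Real.sin x by positivity), div_le_iff₀ (by positivity)]
  have h4 : x * (x * (3 / 4 * x)) ≤ x * (x * Real.sin x) := by gcongr
  have h5 : x * (1 - x ^ 2 / 2) ≤ x * Real.cos x := by gcongr
  have h6 : x * Real.cos x ≤ x * 1 := by gcongr
  have h7 : 0 < x ^ 3 := by positivity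
  rw [abs_le]
  constructor <;> nlinarith

/-- The Liouville-type factor. -/
noncomputable def djoPsi (ν σ θ : ℝ) : ℝ :=
  (2 * Real.sin (θ / 2) / θ) ^ ν * Real.cos (θ / 2) ^ σ

/-- Its logarithmic derivative. -/
noncomputable def djoTau (ν σ θ : ℝ) : ℝ :=
  ν * (Real.cos (θ / 2) / (2 * Real.sin (θ / 2)) - 1 / θ) -
    σ * (Real.sin (θ / 2) / (2 * Real.cos (θ / 2)))

lemma djo_half_pos (θ : ℝ) (hθ : θ ∈ Set.Ioc 0 (π / 2)) :
    0 < Real.sin (θ / 2) ∧ 0 < Real.cos (θ / 2) ∧ 1 / 2 ≤ Real.cos (θ / 2) ^ 2 := by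
  have hp := Real.pi_pos
  obtain ⟨h0, h1⟩ := hθ
  refine ⟨Real.sin_pos_of_pos_of_lt_pi (by linarith) (by linarith),
    Real.cos_pos_of_mem_Ioo ⟨by linarith, by linarith⟩, ?_⟩
  rw [Real.cos_sq]
  have : 0 ≤ Real.cos (2 * (θ / 2)) := Real.cos_nonneg_of_mem_Icc ⟨by linarith, by linarith⟩
  linarith

lemma djo_psi_deriv (ν σ θ : ℝ) (hθ : θ ∈ Set.Ioc 0 (π / 2)) :
    HasDerivAt (djoPsi ν σ) (djoPsi ν σ θ * djoTau ν σ θ) θ := by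
  obtain ⟨hs, hc, -⟩ := djo_half_pos θ hθ
  have h0 : 0 < θ := hθ.1
  have hd : HasDerivAt (fun θ : ℝ => θ / 2) (1 / 2) θ := (hasDerivAt_id θ).div_const 2
  have h1 := ((hd.sin.const_mul 2).div (hasDerivAt_id θ) h0.ne').rpow_const (p := ν)
    (Or.inl (show 2 * Real.sin (θ / 2) / θ ≠ 0 by positivity))
  have h2 := hd.cos.rpow_const (p := σ) (Or.inl hc.ne')
  have h3 := h1.mul h2
  refine h3.congr_deriv ?_
  simp only [id, Pi.div_apply]
  unfold djoPsi djoTau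
  have hq : 0 < 2 * Real.sin (θ / 2) / θ := by positivity
  rw [Real.rpow_sub_one hq.ne', Real.rpow_sub_one hc.ne']
  field_simp
  ring

lemma djo_tau_deriv (ν σ θ : ℝ) (hθ : θ ∈ Set.Ioc 0 (π / 2)) :
    HasDerivAt (djoTau ν σ)
      (ν * (1 / θ ^ 2 - 1 / (4 * Real.sin (θ / 2) ^ 2)) - σ / (4 * Real.cos (θ / 2) ^ 2)) θ := by
  obtain ⟨hs, hc, -⟩ := djo_half_pos θ hθ
  have h0 : 0 < θ := hθ.1
  have hd : HasDerivAt (fun θ : ℝ => θ / 2) (1 / 2) θ := (hasDerivAt_id θ).div_const 2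
  have h1 := hd.cos.div (hd.sin.const_mul 2) (by positivity)
  have h2 := (hasDerivAt_const θ (1 : ℝ)).div (hasDerivAt_id θ) h0.ne'
  have h3 := hd.sin.div (hd.cos.const_mul 2) (by positivity)
  have h4 := ((h1.sub h2).const_mul ν).sub (h3.const_mul σ)
  refine h4.congr_deriv ?_
  have hsc := Real.sin_sq_add_cos_sq (θ / 2)
  simp only [id]
  have e1 : (-Real.sin (θ / 2) * (1 / 2) * (2 * Real.sin (θ / 2)) -
      Real.cos (θ / 2) * (2 * (Real.cos (θ / 2) * (1 / 2)))) / (2 * Real.sin (θ / 2)) ^ 2 =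
      -(1 / (4 * Real.sin (θ / 2) ^ 2)) := by
    field_simp
    linear_combination (-4) * hsc
  have e2 : (Real.cos (θ / 2) * (1 / 2) * (2 * Real.cos (θ / 2)) -
      Real.sin (θ / 2) * (2 * (-Real.sin (θ / 2) * (1 / 2)))) / (2 * Real.cos (θ / 2)) ^ 2 =
      1 / (4 * Real.cos (θ / 2) ^ 2) := by
    field_simp
    linear_combination 4 * hsc
  rw [e1, e2]
  ring

/-- Derivative of `ψ(θ) P(cos θ)`. -/
noncomputable def djoV (a b : ℝ) (n : ℕ) (θ : ℝ) : ℝ :=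
  djoPsi (a + 1 / 2) (b + 1 / 2) θ * (-Real.sin θ * djoP1 a b n (Real.cos θ) +
    djoTau (a + 1 / 2) (b + 1 / 2) θ * jacobiP a b n (Real.cos θ))

/-- The perturbation potential. -/
noncomputable def djoG (ν σ θ : ℝ) : ℝ :=
  ν * (ν - 1) * (1 / θ ^ 2 - 1 / (4 * Real.sin (θ / 2) ^ 2)) -
    σ * (σ - 1) / (4 * Real.cos (θ / 2) ^ 2)

lemma djo_G_bound (ν σ θ : ℝ) (hθ : θ ∈ Set.Ioc 0 (π / 2)) :
    |djoG ν σ θ| ≤ |ν * (ν - 1)| + |σ * (σ - 1)| := by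
  obtain ⟨hs, hc, hc2⟩ := djo_half_pos θ hθ
  have h0 : 0 < θ := hθ.1
  have h1 := djo_bound_sq (θ / 2) (by linarith) (by linarith [hθ.2, Real.pi_le_four])
  have e1 : 1 / θ ^ 2 - 1 / (4 * Real.sin (θ / 2) ^ 2) =
      1 / 4 * (1 / (θ / 2) ^ 2 - 1 / Real.sin (θ / 2) ^ 2) := by field_simp; ring
  unfold djoG
  refine (abs_sub _ _).trans ?_
  rw [e1, abs_mul _ (1 / 4 * _), abs_div, abs_mul (1 / 4 : ℝ)]
  have h2 : |(4 * Real.cos (θ / 2) ^ 2)| = 4 * Real.cos (θ / 2) ^ 2 := abs_of_pos (by positivity)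
  rw [h2]
  have h3 : |σ * (σ - 1)| / (4 * Real.cos (θ / 2) ^ 2) ≤ |σ * (σ - 1)| :=
    div_le_self (abs_nonneg _) (by linarith)
  have h4 : |(1 / 4 : ℝ)| = 1 / 4 := abs_of_pos (by norm_num)
  rw [h4]
  have h5 : |ν * (ν - 1)| * (1 / 4 * |1 / (θ / 2) ^ 2 - 1 / Real.sin (θ / 2) ^ 2|) ≤
      |ν * (ν - 1)| * 1 := by
    apply mul_le_mul_of_nonneg_left _ (abs_nonneg _)
    linarith
  linarith

lemma djo_U_deriv (a b : ℝ) (n : ℕ) (θ : ℝ) (hθ : θ ∈ Set.Ioc 0 (π / 2)) :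
    HasDerivAt (fun θ => djoPsi (a + 1 / 2) (b + 1 / 2) θ * jacobiP a b n (Real.cos θ))
      (djoV a b n θ) θ := by
  have h1 := djo_psi_deriv (a + 1 / 2) (b + 1 / 2) θ hθ
  have h2 := (djo_hasDeriv a b n (Real.cos θ)).comp θ (Real.hasDerivAt_cos θ)
  refine (h1.mul h2).congr_deriv ?_
  simp only [Function.comp, djoV]
  ring

lemma djo_V_deriv (a b : ℝ) (ha : -1 < a) (hb : -1 < b) (n : ℕ) (θ : ℝ)
    (hθ : θ ∈ Set.Ioc 0 (π / 2)) :
    HasDerivAt (djoV a b n)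
      (-(2 * (a + 1 / 2) / θ) * djoV a b n θ -
        ((n + (a + b + 1) / 2) ^ 2 + djoG (a + 1 / 2) (b + 1 / 2) θ) *
        (djoPsi (a + 1 / 2) (b + 1 / 2) θ * jacobiP a b n (Real.cos θ))) θ := by
  obtain ⟨hs, hc, -⟩ := djo_half_pos θ hθ
  have h0 : 0 < θ := hθ.1
  have h1 := djo_psi_deriv (a + 1 / 2) (b + 1 / 2) θ hθ
  have h2 := (djo_hasDeriv a b n (Real.cos θ)).comp θ (Real.hasDerivAt_cos θ)
  have h3 := (djo_hasDeriv1 a b n (Real.cos θ)).comp θ (Real.hasDerivAt_cos θ)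
  have h4 := djo_tau_deriv (a + 1 / 2) (b + 1 / 2) θ hθ
  have h5 := h1.mul (((Real.hasDerivAt_sin θ).neg.mul h3).add (h4.mul h2))
  refine h5.congr_deriv ?_
  have hode := djo_ode a b ha hb n (Real.cos θ)
  simp only [Function.comp, djoV, Pi.neg_apply, Pi.add_apply, Pi.mul_apply]
  generalize djoP1 a b n (Real.cos θ) = p1 at *
  generalize djoP2 a b n (Real.cos θ) = p2 at *
  generalize jacobiP a b n (Real.cos θ) = p at *
  generalize djoPsi (a + 1 / 2) (b + 1 / 2) θ = ψ at *
  have hsin : Real.sin θ = 2 * Real.sin (θ / 2) * Real.cos (θ / 2) := by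
    rw [← Real.sin_two_mul]; congr 1; ring
  have hcos : Real.cos θ = Real.cos (θ / 2) ^ 2 - Real.sin (θ / 2) ^ 2 := by
    rw [← Real.cos_two_mul']; congr 1; ring
  have hsc := Real.sin_sq_add_cos_sq (θ / 2)
  have hsc2 := Real.sin_sq_add_cos_sq θ
  -- second derivative of `P(cos θ)`
  have hy2 : -Real.cos θ * p1 + -Real.sin θ * (p2 * -Real.sin θ) =
      ((a + b + 1) * Real.cos θ + a - b) * p1 - n * (n + a + b + 1) * p := by
    linear_combination hode + p2 * hsc2
  have htau : 2 * (djoTau (a + 1 / 2) (b + 1 / 2) θ + (a + 1 / 2) / θ) * (Real.sin θ * p1) =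
      ((a + b + 1) * Real.cos θ + a - b) * p1 := by
    unfold djoTau
    rw [hsin, hcos]
    field_simp
    linear_combination (θ * p1 * (a - b)) * hsc
  have hpot : (2 * (a + 1 / 2) / θ) * djoTau (a + 1 / 2) (b + 1 / 2) θ +
      djoTau (a + 1 / 2) (b + 1 / 2) θ ^ 2 +
      ((a + 1 / 2) * (1 / θ ^ 2 - 1 / (4 * Real.sin (θ / 2) ^ 2)) -
        (b + 1 / 2) / (4 * Real.cos (θ / 2) ^ 2)) - n * (n + a + b + 1) =
      -((n + (a + b + 1) / 2) ^ 2 + djoG (a + 1 / 2) (b + 1 / 2) θ) := by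
    unfold djoTau djoG
    generalize Real.cos (θ / 2) = c at *
    generalize Real.sin (θ / 2) = s at *
    have hA : (c / (2 * s)) ^ 2 = 1 / (4 * s ^ 2) - 1 / 4 := by
      field_simp; linear_combination 4 * hsc
    have hB : (s / (2 * c)) ^ 2 = 1 / (4 * c ^ 2) - 1 / 4 := by
      field_simp; linear_combination 4 * hsc
    have hAB : (c / (2 * s)) * (s / (2 * c)) = 1 / 4 := by
      field_simp; norm_num
    linear_combination (a + 1 / 2) ^ 2 * hA + (b + 1 / 2) ^ 2 * hB -
      2 * (a + 1 / 2) * (b + 1 / 2) * hAB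
  linear_combination ψ * hy2 + ψ * p * hpot - ψ * htau

lemma djo_psi_lim (ν σ : ℝ) :
    Filter.Tendsto (djoPsi ν σ) (nhdsWithin 0 (Set.Ioi 0)) (nhds 1) := by
  have h1 : ContinuousAt (fun θ : ℝ => Real.sinc (θ / 2) ^ ν * Real.cos (θ / 2) ^ σ) 0 := by
    refine ContinuousAt.mul ?_ ?_
    · refine ContinuousAt.rpow_const ?_ (Or.inl (by simp))
      exact (Real.continuous_sinc.comp (continuous_id.div_const 2)).continuousAt
    · refine ContinuousAt.rpow_const (by fun_prop) (Or.inl (by simp))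
  have h2 := h1.tendsto
  simp only [zero_div, Real.sinc_zero, Real.cos_zero, Real.one_rpow, mul_one] at h2
  refine (h2.mono_left nhdsWithin_le_nhds).congr' ?_
  filter_upwards [self_mem_nhdsWithin] with θ hθ
  have hθ : (0 : ℝ) < θ := hθ
  unfold djoPsi
  rw [Real.sinc_of_ne_zero (by positivity)]
  congr 2
  field_simp

lemma djo_tau_lim (ν σ : ℝ) :
    Filter.Tendsto (djoTau ν σ) (nhdsWithin 0 (Set.Ioi 0)) (nhds 0) := by
  have h1 : Filter.Tendsto (fun θ : ℝ => Real.cos (θ / 2) / (2 * Real.sin (θ / 2)) - 1 / θ)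
      (nhdsWithin 0 (Set.Ioi 0)) (nhds 0) := by
    have hl : Filter.Tendsto (fun θ : ℝ => θ) (nhdsWithin 0 (Set.Ioi 0)) (nhds 0) :=
      Filter.tendsto_id.mono_left nhdsWithin_le_nhds
    refine squeeze_zero_norm' ?_ hl
    filter_upwards [Ioo_mem_nhdsGT (show (0 : ℝ) < 1 by norm_num)] with θ hθ
    have h0 := hθ.1
    have hb := djo_bound_cot (θ / 2) (by linarith) (by linarith [hθ.2])
    have e : Real.cos (θ / 2) / (2 * Real.sin (θ / 2)) - 1 / θ =
        1 / 2 * (Real.cos (θ / 2) / Real.sin (θ / 2) - 1 / (θ / 2)) := by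
      have e1 : 1 / (θ / 2) = 2 * (1 / θ) := by field_simp
      rw [e1, mul_comm 2 (Real.sin _), ← div_div]; ring
    rw [e, Real.norm_eq_abs, abs_mul, abs_of_pos (by norm_num : (0 : ℝ) < 1 / 2)]
    linarith
  have h2 : ContinuousAt (fun θ : ℝ => Real.sin (θ / 2) / (2 * Real.cos (θ / 2))) 0 :=
    ContinuousAt.div (by fun_prop) (by fun_prop) (by simp)
  have h3 := h2.tendsto.mono_left (nhdsWithin_le_nhds (s := Set.Ioi 0))
  simp only [zero_div, Real.sin_zero] at h3
  have h4 := (h1.const_mul ν).sub (h3.const_mul σ)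
  rw [mul_zero, mul_zero, sub_zero] at h4
  exact h4

lemma djo_jacobi_model (μ b : ℝ) (hμ : 0 < μ) (hb : -1 < b) :
    ∃ C : ℝ, 0 < C ∧ ∀ (n : ℕ) (N : ℝ), N = n + (μ + 1 / 2 + b + 1) / 2 → 1 ≤ N →
      ∀ θ ∈ Set.Icc (1 / N) (π / 2),
        |θ ^ (μ + 1) * (djoPsi (μ + 1) (b + 1 / 2) θ *
          jacobiP (μ + 1 / 2) b n (Real.cos θ) / jacobiP (μ + 1 / 2) b n 1 -
          djoJ μ (N * θ) / djoJ μ 0)| ≤ C * N ^ (-(μ + 1)) / N := by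
  obtain ⟨A, hA, hAb⟩ := djo_J_asymp μ hμ
  have hJ0 := djo_J_zero_pos μ hμ
  have hΓ := Real.Gamma_pos_of_pos (show 0 < μ + 1 by linarith)
  set ν := μ + 1 with hν
  set σ := b + 1 / 2 with hσ
  set B := 2 ^ ν * Real.Gamma ν + A with hB
  have hB0 : 0 < B := by positivity
  obtain ⟨C, hC, hcmp⟩ := djo_compare ν (|ν * (ν - 1)| + |σ * (σ - 1)|) (B / djoJ μ 0 + 1)
    (by linarith) (by positivity) (by positivity)
  refine ⟨C, hC, fun n N hN hN1 => ?_⟩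
  have hN0 : 0 < N := by linarith
  set a := μ + 1 / 2 with ha
  have hav : a + 1 / 2 = ν := by rw [ha, hν]; ring
  set p := jacobiP a b n 1 with hp
  have hp0 : 0 < p := by
    rw [hp, djo_C_pos_aux a b (by linarith) hb n]
    have h1 := Real.Gamma_pos_of_pos (show 0 < (n : ℝ) + a + 1 by positivity)
    have h2 := Real.Gamma_pos_of_pos (show 0 < a + 1 by positivity)
    have h3 := Real.Gamma_pos_of_pos (show 0 < (n : ℝ) + 1 by positivity)
    positivity
  refine hcmp N
    (fun θ => djoPsi ν σ θ * jacobiP a b n (Real.cos θ) / p - djoJ μ (N * θ) / djoJ μ 0)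
    (fun θ => djoV a b n θ / p - djoJ1 μ (N * θ) * N / djoJ μ 0)
    (fun θ => djoJ μ (N * θ) / djoJ μ 0) (djoG ν σ) hN1 ?_ ?_ ?_ ?_ ?_ ?_
  · intro x hx
    have h1 := djo_U_deriv a b n x hx
    rw [hav] at h1
    have h2 : HasDerivAt (fun θ : ℝ => djoJ μ (N * θ)) (djoJ1 μ (N * x) * N) x := by
      have h3 : HasDerivAt (fun θ : ℝ => N * θ) N x := by
        simpa using (hasDerivAt_id x).const_mul N
      exact (djo_J_deriv μ (N * x) hμ).comp x h3
    exact (h1.div_const p).sub (h2.div_const _)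
  · intro x hx
    have hx0 : 0 < x := hx.1
    have h1 := djo_V_deriv a b (by linarith) hb n x hx
    have h2 : HasDerivAt (fun θ : ℝ => djoJ1 μ (N * θ))
        ((-djoJ μ (N * x) - 2 * (μ + 1) / (N * x) * djoJ1 μ (N * x)) * N) x := by
      have h3 : HasDerivAt (fun θ : ℝ => N * θ) N x := by
        simpa using (hasDerivAt_id x).const_mul N
      exact (djo_J1_deriv μ (N * x) hμ (by positivity)).comp x h3
    refine ((h1.div_const p).sub ((h2.mul_const N).div_const _)).congr_deriv ?_
    rw [hav, ← hN, ← hν, ← hσ]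
    have e : 2 * ν / (N * x) = 2 * ν / x / N := by field_simp
    rw [e]
    field_simp
    ring
  · intro x hx
    exact djo_G_bound ν σ x hx
  · intro x hx
    rw [abs_div, abs_of_pos hJ0]
    have h1 : |djoJ μ (N * x)| / djoJ μ 0 ≤ 1 := by
      rw [div_le_one hJ0]; exact djo_J_le μ (N * x) hμ
    have : 0 < B / djoJ μ 0 := by positivity
    linarith
  · intro x hx
    have hx0 : 0 < x := lt_of_lt_of_le (by positivity) hx.1
    have hz : 1 ≤ N * x := by
      have := hx.1
      rw [div_le_iff₀ hN0] at this
      linarith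
    have h1 := hAb (N * x) hz
    have h2 : |(N * x) ^ ν * djoJ μ (N * x)| ≤ B := by
      have h3 : A / (N * x) ≤ A := div_le_self hA.le hz
      have h4 : |2 ^ ν * Real.Gamma ν * Real.sin (N * x - μ * π / 2)| ≤ 2 ^ ν * Real.Gamma ν := by
        rw [abs_mul, abs_of_pos (by positivity : 0 < 2 ^ ν * Real.Gamma ν)]
        exact mul_le_of_le_one_right (by positivity) (Real.abs_sin_le_one _)
      have h5 := abs_add_le ((N * x) ^ ν * djoJ μ (N * x) -
        2 ^ ν * Real.Gamma ν * Real.sin (N * x - μ * π / 2))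
        (2 ^ ν * Real.Gamma ν * Real.sin (N * x - μ * π / 2))
      rw [sub_add_cancel] at h5
      linarith
    have e : x ^ ν * (djoJ μ (N * x) / djoJ μ 0) =
        ((N * x) ^ ν * djoJ μ (N * x)) / djoJ μ 0 * N ^ (-ν) := by
      rw [Real.mul_rpow hN0.le hx0.le, Real.rpow_neg hN0.le]
      have : 0 < N ^ ν := by positivity
      field_simp
    have hNn : 0 < N ^ (-ν) := by positivity
    rw [e, abs_mul _ (N ^ (-ν)), abs_of_pos hNn, abs_div, abs_of_pos hJ0]
    refine mul_le_mul_of_nonneg_right ?_ hNn.le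
    have : |(N * x) ^ ν * djoJ μ (N * x)| / djoJ μ 0 ≤ B / djoJ μ 0 := by gcongr
    linarith
  · have hid : Filter.Tendsto (fun θ : ℝ => θ) (nhdsWithin 0 (Set.Ioi 0)) (nhds 0) :=
      Filter.tendsto_id.mono_left nhdsWithin_le_nhds
    have hcos : Filter.Tendsto Real.cos (nhdsWithin 0 (Set.Ioi 0)) (nhds 1) := by
      have := Real.continuous_cos.tendsto 0
      rw [Real.cos_zero] at this
      exact this.mono_left nhdsWithin_le_nhds
    have hsin : Filter.Tendsto Real.sin (nhdsWithin 0 (Set.Ioi 0)) (nhds 0) := by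
      have := Real.continuous_sin.tendsto 0
      rw [Real.sin_zero] at this
      exact this.mono_left nhdsWithin_le_nhds
    have hNx : Filter.Tendsto (fun θ : ℝ => N * θ) (nhdsWithin 0 (Set.Ioi 0)) (nhds 0) := by
      simpa using hid.const_mul N
    have hP : Filter.Tendsto (fun θ => jacobiP a b n (Real.cos θ)) (nhdsWithin 0 (Set.Ioi 0))
        (nhds p) := (djo_hasDeriv a b n 1).continuousAt.tendsto.comp hcos
    have hP1 : Filter.Tendsto (fun θ => djoP1 a b n (Real.cos θ)) (nhdsWithin 0 (Set.Ioi 0))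
        (nhds (djoP1 a b n 1)) := (djo_hasDeriv1 a b n 1).continuousAt.tendsto.comp hcos
    have hJl : Filter.Tendsto (fun θ => djoJ μ (N * θ)) (nhdsWithin 0 (Set.Ioi 0))
        (nhds (djoJ μ 0)) := (djo_J_deriv μ 0 hμ).continuousAt.tendsto.comp hNx
    have hJ2 : Filter.Tendsto (fun θ => djoJ (μ + 1) (N * θ)) (nhdsWithin 0 (Set.Ioi 0))
        (nhds (djoJ (μ + 1) 0)) :=
      (djo_J_deriv (μ + 1) 0 (by linarith)).continuousAt.tendsto.comp hNx
    have hJ1 : Filter.Tendsto (fun θ => djoJ1 μ (N * θ)) (nhdsWithin 0 (Set.Ioi 0)) (nhds 0) := by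
      have h1 := ((hNx.mul hJ2).neg).div_const (2 * (μ + 1))
      rw [zero_mul, neg_zero, zero_div] at h1
      refine h1.congr fun θ => ?_
      rw [← djo_J1_eq μ (N * θ) hμ]
      field_simp
    have hV : Filter.Tendsto (djoV a b n) (nhdsWithin 0 (Set.Ioi 0)) (nhds 0) := by
      have h1 := (djo_psi_lim (a + 1 / 2) (b + 1 / 2)).mul ((hsin.neg.mul hP1).add
        ((djo_tau_lim (a + 1 / 2) (b + 1 / 2)).mul hP))
      simp only [neg_zero, zero_mul, add_zero, mul_zero] at h1
      exact h1
    have hD := (((djo_psi_lim ν σ).mul hP).div_const p).sub (hJl.div_const (djoJ μ 0))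
    have he := (hV.div_const p).sub ((hJ1.mul_const N).div_const (djoJ μ 0))
    rw [one_mul, div_self hp0.ne', div_self hJ0.ne', sub_self] at hD
    rw [zero_mul, zero_div, zero_div, sub_zero] at he
    have h := (he.pow 2).add ((hD.pow 2).const_mul (N ^ 2))
    simpa using h

/-! ### Part 8: assembly -/

lemma djo_Q (μ b : ℝ) (hμ : 0 < μ) (hb : -1 < b) :
    ∃ E : ℝ, 0 < E ∧ ∀ (n : ℕ) (N : ℝ), N = n + (μ + 1 / 2 + b + 1) / 2 → 1 ≤ N →
      ∀ θ ∈ Set.Icc (1 / N) (π / 2),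
        |(N * θ) ^ (μ + 1) * (djoPsi (μ + 1) (b + 1 / 2) θ *
          jacobiP (μ + 1 / 2) b n (Real.cos θ) / jacobiP (μ + 1 / 2) b n 1) /
          (2 ^ (μ + 1) * Real.Gamma (μ + 3 / 2) / √π) - Real.sin (N * θ - μ * π / 2)| ≤
          E / (N * θ) := by
  obtain ⟨A, hA, hAb⟩ := djo_J_asymp μ hμ
  obtain ⟨C, hC, hCb⟩ := djo_jacobi_model μ b hμ hb
  have hJ0 := djo_J_zero_pos μ hμ
  have hJv := djo_J_zero μ hμ
  have hΓ := Real.Gamma_pos_of_pos (show 0 < μ + 1 by linarith)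
  have hΓ2 := Real.Gamma_pos_of_pos (show 0 < μ + 3 / 2 by linarith)
  have hpi : 0 < √π := Real.sqrt_pos.2 Real.pi_pos
  set k := 2 ^ (μ + 1) * Real.Gamma (μ + 3 / 2) / √π with hk
  have hk0 : 0 < k := by positivity
  have hkv : k * djoJ μ 0 = 2 ^ (μ + 1) * Real.Gamma (μ + 1) := by
    rw [hk, div_mul_eq_mul_div, div_eq_iff hpi.ne']
    linear_combination 2 ^ (μ + 1) * hJv
  refine ⟨(2 * C + A / djoJ μ 0) / k, by positivity, fun n N hN hN1 θ hθ => ?_⟩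
  have h1 := hCb n N hN hN1 θ hθ
  have hN0 : 0 < N := by linarith
  have hθ0 : 0 < θ := lt_of_lt_of_le (by positivity) hθ.1
  have hz : 1 ≤ N * θ := by
    have := hθ.1
    rw [div_le_iff₀ hN0] at this
    linarith
  have h2 := hAb (N * θ) hz
  generalize djoPsi (μ + 1) (b + 1 / 2) θ *
          jacobiP (μ + 1 / 2) b n (Real.cos θ) / jacobiP (μ + 1 / 2) b n 1 = y at *
  generalize djoJ μ (N * θ) = J at *
  generalize djoJ μ 0 = J0 at *
  generalize Real.sin (N * θ - μ * π / 2) = S at *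
  have hNp : 0 < N ^ (μ + 1) := by positivity
  have h3 : |(N * θ) ^ (μ + 1) * (y - J / J0)| ≤ C / N := by
    rw [Real.mul_rpow hN0.le hθ0.le, mul_assoc, abs_mul, abs_of_pos hNp]
    calc _ ≤ N ^ (μ + 1) * (C * N ^ (-(μ + 1)) / N) := by gcongr
      _ = (N ^ (μ + 1) * N ^ (-(μ + 1))) * (C / N) := by ring
      _ = C / N := by rw [← Real.rpow_add hN0, add_neg_cancel, Real.rpow_zero, one_mul]
  have h4 : C / N ≤ 2 * C / (N * θ) := by
    rw [div_le_div_iff₀ hN0 (by positivity)]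
    have : θ ≤ 2 := by linarith [hθ.2, Real.pi_le_four]
    have : C * (N * θ) ≤ C * (N * 2) := by gcongr
    linarith
  have e : (N * θ) ^ (μ + 1) * y / k - S =
      ((N * θ) ^ (μ + 1) * (y - J / J0) +
        ((N * θ) ^ (μ + 1) * J - 2 ^ (μ + 1) * Real.Gamma (μ + 1) * S) / J0) / k := by
    rw [← hkv]
    field_simp
    ring
  rw [e, abs_div, abs_of_pos hk0, div_right_comm]
  refine div_le_div_of_nonneg_right ?_ hk0.le
  refine (abs_add_le _ _).trans ?_
  rw [abs_div, abs_of_pos hJ0, add_div]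
  refine add_le_add (h3.trans h4) ?_
  rw [div_right_comm]
  exact div_le_div_of_nonneg_right h2 hJ0.le

lemma djo_alg (w G1 G2 G3 G4 G5 g P n1 n2 n3 q1 q2 q3 r : ℝ) (h1 : 0 < G1) (h2 : 0 < G2)
    (h3 : 0 < G3) (h4 : 0 < G4) (h5 : 0 < G5) (hn1 : 0 < n1) (hq1 : 0 < q1) (hq2 : 0 < q2)
    (hq3 : 0 < q3) (hr : 0 < r) (hpow : n2 * n3 = n1 * n1) :
    w / G1 * (g / G3) * P = w / G1 * n2 * (r⁻¹ * q1⁻¹ * q2⁻¹) *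
      (g / (G3 * n1) * (G5 / (G4 * n1)) *
        (n3 * (q3 * q1 * q2) * (P / (G5 / (G2 * G4))) / (q3 * G2 / r))) := by
  have e : w / G1 * n2 * (r⁻¹ * q1⁻¹ * q2⁻¹) *
      (g / (G3 * n1) * (G5 / (G4 * n1)) *
        (n3 * (q3 * q1 * q2) * (P / (G5 / (G2 * G4))) / (q3 * G2 / r))) =
      w / G1 * (g / G3) * P * ((n2 * n3) / (n1 * n1)) := by
    field_simp
  rw [e, hpow, div_self (by positivity), mul_one]

/-- Lemma 2.4 i): one-term asymptotics of the generalised Dirichlet kernel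
`v_L^{(α,β)}(1,cos θ)` for `c⁽¹⁾/L ≤ θ ≤ π/2`, with `L̃ = L + (α+β+2)/2`. -/
theorem dirichletJ_one_term_asymptotics_left (α β : ℝ)
    (hα : -(1 / 2 : ℝ) < α) (hβ : -(1 / 2 : ℝ) < β) :
    ∃ c : ℝ, 0 < c ∧ ∃ C : ℝ, 0 < C ∧
      ∀ L : ℕ, 1 ≤ L → ∀ θ : ℝ, c / (L : ℝ) ≤ θ → θ ≤ Real.pi / 2 →
        |dirichletJ α β L 1 (Real.cos θ) -
            (2 : ℝ) ^ (-(α + β + 1)) / Real.Gamma (α + 1) *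
              ((L : ℝ) + (α + β + 2) / 2) ^ (α + 1 / 2) * mAB (α + 1) β θ *
                Real.cos (omegaA (α + 1) (((L : ℝ) + (α + β + 2) / 2) * θ))| ≤
          C * ((2 : ℝ) ^ (-(α + β + 1)) / Real.Gamma (α + 1)) *
            ((L : ℝ) + (α + β + 2) / 2) ^ (α + 1 / 2) * mAB (α + 1) β θ *
              (Real.sin θ)⁻¹ * (L : ℝ)⁻¹ := by
  obtain ⟨E, hE, hEb⟩ := djo_Q (α + 1 / 2) β (by linarith) (by linarith)
  obtain ⟨R, hR, hRb⟩ := (djo_near_main (β + 1) ((α + β + 2) / 2) (α + 1) (by linarith)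
    (by linarith) (by linarith)).mul (djo_near_main 1 ((α + β + 2) / 2) (α + 1) (by norm_num)
    (by linarith) (by linarith))
  refine ⟨1, one_pos, R * (1 + E) + E, by positivity, fun L hL θ hθ1 hθ2 => ?_⟩
  have hL1 : (1 : ℝ) ≤ L := by exact_mod_cast hL
  have hL0 : (0 : ℝ) < L := by linarith
  have hρ := hRb L hL
  beta_reduce at hρ
  have hkern := djo_kernel α β hα hβ L (Real.cos θ)
  have hp := djo_C_pos_aux (α + 1) β (by linarith) (by linarith) L
  set N : ℝ := (L : ℝ) + (α + β + 2) / 2 with hN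
  have hNL : (L : ℝ) ≤ N := by rw [hN]; linarith
  have hN0 : 0 < N := by linarith
  have hθ0 : 0 < θ := lt_of_lt_of_le (by positivity) hθ1
  have hz : 1 ≤ N * θ := by
    rw [div_le_iff₀ hL0] at hθ1
    calc 1 ≤ θ * L := hθ1
      _ ≤ θ * N := by gcongr
      _ = N * θ := mul_comm _ _
  have hθm : θ ∈ Set.Icc (1 / N) (π / 2) := by
    refine ⟨?_, hθ2⟩
    rw [div_le_iff₀ hN0]; linarith
  have hQ := hEb L N (by rw [hN]; ring) (by linarith) θ hθm
  obtain ⟨hs, hc, -⟩ := djo_half_pos θ ⟨hθ0, hθ2⟩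
  have hsθ : 0 < Real.sin θ :=
    Real.sin_pos_of_pos_of_lt_pi hθ0 (by linarith [Real.pi_pos])
  have hω : Real.cos (omegaA (α + 1) (N * θ)) = Real.sin (N * θ - (α + 1 / 2) * π / 2) := by
    unfold omegaA
    rw [← Real.cos_sub_pi_div_two]
    congr 1; ring
  have ea : α + 1 / 2 + 1 / 2 = α + 1 := by ring
  have eg : α + 1 / 2 + 3 / 2 = α + 2 := by ring
  have en : α + 1 / 2 + 1 = α + 3 / 2 := by ring
  rw [ea, eg, en] at hQ
  rw [hω]
  set S := Real.sin (N * θ - (α + 1 / 2) * π / 2) with hS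
  have hS1 : |S| ≤ 1 := Real.abs_sin_le_one _
  have hΓ1 := Real.Gamma_pos_of_pos (show 0 < α + 1 by linarith)
  have hΓ2 := Real.Gamma_pos_of_pos (show 0 < α + 2 by linarith)
  have hΓ3 := Real.Gamma_pos_of_pos (show 0 < (L : ℝ) + β + 1 by linarith)
  have hΓ4 := Real.Gamma_pos_of_pos (show 0 < (L : ℝ) + 1 by linarith)
  have hΓ5 := Real.Gamma_pos_of_pos (show 0 < (L : ℝ) + α + 2 by linarith)
  have hpi : 0 < √π := Real.sqrt_pos.2 Real.pi_pos
  have hm : mAB (α + 1) β θ = (√π)⁻¹ * (Real.sin (θ / 2) ^ (α + 3 / 2))⁻¹ *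
      (Real.cos (θ / 2) ^ (β + 1 / 2))⁻¹ := by
    unfold mAB
    rw [← Real.rpow_neg hs.le, ← Real.rpow_neg hc.le, Real.sqrt_eq_rpow,
      ← Real.rpow_neg Real.pi_pos.le]
    congr 2
    · congr 1; ring
    · ring
  have hm0 : 0 < mAB (α + 1) β θ := by rw [hm]; positivity
  -- rewrite `ρ`
  have er1 : (L : ℝ) + (β + 1) + (α + 1) = L + α + β + 2 := by ring
  have er2 : (L : ℝ) + (β + 1) = L + β + 1 := by ring
  have er3 : (L : ℝ) + 1 + (α + 1) = L + α + 2 := by ring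
  rw [er1, er2, er3] at hρ
  have ep : (L : ℝ) + (α + 1) + 1 = L + α + 2 := by ring
  have ep2 : α + 1 + 1 = α + 2 := by ring
  rw [ep, ep2] at hp
  set ρ := Real.Gamma (L + α + β + 2) / (Real.Gamma (L + β + 1) * N ^ (α + 1)) *
    (Real.Gamma (L + α + 2) / (Real.Gamma (L + 1) * N ^ (α + 1))) with hρd
  set Q := (N * θ) ^ (α + 3 / 2) * (djoPsi (α + 3 / 2) (β + 1 / 2) θ *
    jacobiP (α + 1) β L (Real.cos θ) / jacobiP (α + 1) β L 1) /
      (2 ^ (α + 3 / 2) * Real.Gamma (α + 2) / √π) with hQd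
  have hv : dirichletJ α β L 1 (Real.cos θ) = (2 : ℝ) ^ (-(α + β + 1)) / Real.Gamma (α + 1) *
      N ^ (α + 1 / 2) * mAB (α + 1) β θ * (ρ * Q) := by
    have hpow : N ^ (α + 1 / 2) * N ^ (α + 3 / 2) = N ^ (α + 1) * N ^ (α + 1) := by
      rw [← Real.rpow_add hN0, ← Real.rpow_add hN0]; congr 1; ring
    have hpsi : θ ^ (α + 3 / 2) * djoPsi (α + 3 / 2) (β + 1 / 2) θ =
        2 ^ (α + 3 / 2) * Real.sin (θ / 2) ^ (α + 3 / 2) * Real.cos (θ / 2) ^ (β + 1 / 2) := by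
      unfold djoPsi
      rw [← mul_assoc, ← Real.mul_rpow hθ0.le (by positivity), mul_div_cancel₀ _ hθ0.ne',
        Real.mul_rpow (by norm_num) hs.le]
    have hQ2 : Q = N ^ (α + 3 / 2) * (θ ^ (α + 3 / 2) * djoPsi (α + 3 / 2) (β + 1 / 2) θ) *
        (jacobiP (α + 1) β L (Real.cos θ) / jacobiP (α + 1) β L 1) /
          (2 ^ (α + 3 / 2) * Real.Gamma (α + 2) / √π) := by
      rw [hQd, Real.mul_rpow hN0.le hθ0.le]; ring
    rw [hkern, hQ2, hpsi, hρd, hm, hp]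
    have h1 : 0 < N ^ (α + 1) := by positivity
    have h2 : 0 < Real.sin (θ / 2) ^ (α + 3 / 2) := by positivity
    have h3 : 0 < Real.cos (θ / 2) ^ (β + 1 / 2) := by positivity
    have h4 : (0 : ℝ) < 2 ^ (α + 3 / 2) := by positivity
    exact djo_alg _ _ _ _ _ _ _ _ _ _ _ _ _ _ _ hΓ1 hΓ2 hΓ3 hΓ4 hΓ5 h1 h2 h3 h4 hpi hpow
  have hKm : 0 < (2 : ℝ) ^ (-(α + β + 1)) / Real.Gamma (α + 1) *
      N ^ (α + 1 / 2) * mAB (α + 1) β θ := by positivity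
  rw [hv, ← mul_sub, abs_mul, abs_of_pos hKm]
  have hrhs : (R * (1 + E) + E) * ((2 : ℝ) ^ (-(α + β + 1)) / Real.Gamma (α + 1)) *
      N ^ (α + 1 / 2) * mAB (α + 1) β θ * (Real.sin θ)⁻¹ * (L : ℝ)⁻¹ =
      (2 : ℝ) ^ (-(α + β + 1)) / Real.Gamma (α + 1) * N ^ (α + 1 / 2) * mAB (α + 1) β θ *
      ((R * (1 + E) + E) * ((Real.sin θ)⁻¹ * (L : ℝ)⁻¹)) := by ring
  rw [hrhs]
  refine mul_le_mul_of_nonneg_left ?_ hKm.le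
  have hEz : E / (N * θ) ≤ E := div_le_self hE.le hz
  have hQ1 : |Q| ≤ 1 + E := by
    have := abs_add_le (Q - S) S
    rw [sub_add_cancel] at this
    linarith
  have hi1 : R / L ≤ R * ((Real.sin θ)⁻¹ * (L : ℝ)⁻¹) := by
    rw [div_eq_mul_inv]
    refine mul_le_mul_of_nonneg_left ?_ hR
    have : 1 ≤ (Real.sin θ)⁻¹ := (one_le_inv₀ hsθ).2 (Real.sin_le_one θ)
    have h0 : 0 ≤ (L : ℝ)⁻¹ := by positivity
    calc (L : ℝ)⁻¹ = 1 * (L : ℝ)⁻¹ := (one_mul _).symm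
      _ ≤ _ := mul_le_mul_of_nonneg_right this h0
  have hi2 : E / (N * θ) ≤ E * ((Real.sin θ)⁻¹ * (L : ℝ)⁻¹) := by
    rw [← mul_inv, ← div_eq_mul_inv]
    refine div_le_div_of_nonneg_left hE.le (by positivity) ?_
    rw [mul_comm N θ]
    exact mul_le_mul (Real.sin_le hθ0.le) hNL hL0.le hθ0.le
  have e : ρ * Q - S = (ρ - 1) * Q + (Q - S) := by ring
  rw [e]
  calc |(ρ - 1) * Q + (Q - S)| ≤ |ρ - 1| * |Q| + |Q - S| := by
        rw [← abs_mul]; exact abs_add_le _ _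
    _ ≤ R / L * (1 + E) + E / (N * θ) := by
        refine add_le_add ?_ hQ
        exact mul_le_mul hρ hQ1 (abs_nonneg _) (by positivity)
    _ ≤ R * ((Real.sin θ)⁻¹ * (L : ℝ)⁻¹) * (1 + E) + E * ((Real.sin θ)⁻¹ * (L : ℝ)⁻¹) := by
        refine add_le_add ?_ hi2
        exact mul_le_mul_of_nonneg_right hi1 (by positivity)
    _ = _ := by ring
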